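/- arXiv:2406.08339 — 2 statements merged into one kernel-verified Lean document; each statement's English description precedes it below -/
import Mathlib

section
/- Let η := 1/(2·4·12²·256). There is a constant c_l > 0 such that for all δ ∈ (0, η²/16) and all ε ∈ (0, η/4) with δ ≤ ε, every u ∈ S₀(ε) satisfies E_{ε,δ}(u) ≥ c_l · min{δ², ε·δ^{3/2}·(|ln(ε/δ^{1/2})| + 1)} (Lemma 5.9, lower bound for small δ). -/
open Real Finset

noncomputable section

/-- `Kof ε` is the largest integer `K` with `K * ε < 1`. -/
def Kof (ε : ℝ) : ℤ := ⌈1 / ε⌉ - 1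

/-- Index set of the lattice `[0,1)² ∩ εℤ²`. -/
def Idx (ε : ℝ) : Finset (ℤ × ℤ) :=
  Finset.Icc 0 (Kof ε) ×ˢ Finset.Icc 0 (Kof ε)

/-- Indices `(i,j)` with `i + 2 ≤ K`. -/
def IdxH (ε : ℝ) : Finset (ℤ × ℤ) :=
  Finset.Icc 0 (Kof ε - 2) ×ˢ Finset.Icc 0 (Kof ε)

/-- Indices `(i,j)` with `j + 2 ≤ K`. -/
def IdxV (ε : ℝ) : Finset (ℤ × ℤ) :=
  Finset.Icc 0 (Kof ε) ×ˢ Finset.Icc 0 (Kof ε - 2)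

/-- Squared Euclidean norm on `ℝ × ℝ`. -/
def sqnorm (v : ℝ × ℝ) : ℝ := v.1 ^ 2 + v.2 ^ 2

/-- Euclidean scalar product on `ℝ × ℝ`. -/
def dotp (a b : ℝ × ℝ) : ℝ := a.1 * b.1 + a.2 * b.2

/-- Cross product `a × b = a₁b₂ − a₂b₁`. -/
def crossp (a b : ℝ × ℝ) : ℝ := a.1 * b.2 - a.2 * b.1

/-- sign with convention `sign 0 = -1`. -/
def sgn (x : ℝ) : ℝ := if 0 < x then 1 else -1

/-- A spin field: unit vectors on the lattice. -/
def IsSpin (ε : ℝ) (u : ℤ × ℤ → ℝ × ℝ) : Prop :=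
  ∀ p ∈ Idx ε, sqnorm (u p) = 1

/-- Spin fields with ferromagnetic Dirichlet boundary condition on the left boundary. -/
def InS0 (ε : ℝ) (u : ℤ × ℤ → ℝ × ℝ) : Prop :=
  IsSpin ε u ∧ ∀ j ∈ Finset.Icc (0 : ℤ) (Kof ε), u (0, j) = (0, 1)

/-- Horizontal part of the energy. -/
def Ehor (ε δ : ℝ) (u : ℤ × ℤ → ℝ × ℝ) : ℝ :=
  ε ^ 2 / 2 * ∑ p ∈ IdxH ε,
    sqnorm (u p - (2 * (1 - δ)) • u (p.1 + 1, p.2) + u (p.1 + 2, p.2))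

/-- Vertical part of the energy. -/
def Ever (ε δ : ℝ) (u : ℤ × ℤ → ℝ × ℝ) : ℝ :=
  ε ^ 2 / 2 * ∑ p ∈ IdxV ε,
    sqnorm (u p - (2 * (1 - δ)) • u (p.1, p.2 + 1) + u (p.1, p.2 + 2))

/-- The total energy `E_{ε,δ}`. -/
def E (ε δ : ℝ) (u : ℤ × ℤ → ℝ × ℝ) : ℝ := Ehor ε δ u + Ever ε δ u

/-- The scaling function `s(ε,δ)`. -/
def sfun (ε δ : ℝ) : ℝ :=
  min (δ ^ 2)
    (min (ε * (δ * Real.sqrt δ) * (|Real.log (ε / Real.sqrt δ)| + 1)) (ε * Real.sqrt δ))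

/-- Horizontal angular velocity of a spin field. -/
def thetaH (u : ℤ × ℤ → ℝ × ℝ) (p : ℤ × ℤ) : ℝ :=
  sgn (crossp (u p) (u (p.1 + 1, p.2))) * Real.arccos (dotp (u p) (u (p.1 + 1, p.2)))

/-- Vertical angular velocity of a spin field. -/
def thetaV (u : ℤ × ℤ → ℝ × ℝ) (p : ℤ × ℤ) : ℝ :=
  sgn (crossp (u p) (u (p.1, p.2 + 1))) * Real.arccos (dotp (u p) (u (p.1, p.2 + 1)))

/-- The function `p` of Lemma 3.1. -/
def pfun (θ₁ θ₂ : ℝ) : ℝ :=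
  if θ₁ = θ₂ then 1
  else (Real.sin θ₁ ^ 2 + Real.sin θ₂ ^ 2 - (1 - Real.cos (θ₁ + θ₂))) /
    (2 * (Real.sin (θ₂ / 2) - Real.sin (θ₁ / 2)) ^ 2)

end

/-!
Write `δ = s ^ 2`. Away from the trivial case of large energy, neighbouring spins are close, so the
field lifts to angles `φ i j` with `φ 0 j = 0` and increments at most `1`.

In a row, a turn exceeding `4 * s` in modulus costs at least a multiple of `s ^ 2` times the square
of the excess. As the row starts at the angle `0`, Hardy's inequality shows that it pays a multiple
of `s ^ 4` for every `i` with `|φ i j| > 5 * s * i`.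

In column `i`, consider a block of `64 * i` consecutive spins. Turns smaller than `s` throughout
cost `s ^ 4` each, and a transition from a turn above `s` to one below `s / 2` costs a multiple of
`s ^ 3`. Otherwise all turns exceed `s / 2` with the same sign, and the angle leaves the interval
`[-5 * s * i, 5 * s * i]` on most of the block, for which the rows pay. In each case the block costs
a multiple of `s ^ 4 * i / (1 + s * i)`, and the sum over the columns produces the logarithm.
-/

/-! ### Hardy's inequality -/

theorem sum_sq_average_le (a : ℕ → ℝ) (M : ℕ) :
    ∑ n ∈ Icc 1 M, ((∑ k ∈ range n, a k) / n) ^ 2 ≤ 4 * ∑ k ∈ range M, a k ^ 2 := by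
  set A : ℕ → ℝ := fun n ↦ (∑ k ∈ range n, a k) / n with hA
  have mul_A (n : ℕ) : n * A n = ∑ k ∈ range n, a k := by
    rcases eq_or_ne n 0 with rfl | hn
    · simp
    · simp only [hA]; field_simp
  have a_eq (n : ℕ) : a n = (n + 1) * A (n + 1) - n * A n := by
    have h := mul_A (n + 1)
    rw [sum_range_succ, ← mul_A n] at h
    push_cast at h
    linarith
  -- The extra term, absent from Hardy's inequality, is what makes the induction close.
  suffices ∑ n ∈ Icc 1 M, A n ^ 2 + 2 * (M * A M ^ 2) ≤ 4 * ∑ k ∈ range M, a k ^ 2 from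
    (le_add_of_nonneg_right (by positivity)).trans this
  induction M with
  | zero => simp
  | succ m ih =>
    rw [sum_Icc_succ_top (by omega), sum_range_succ]
    have increment : A (m + 1) ^ 2 + 2 * ((m + 1) * A (m + 1) ^ 2) - 2 * (m * A m ^ 2)
        = 4 * a m ^ 2 - (A (m + 1) - 2 * a m) ^ 2 - 2 * m * (A (m + 1) - A m) ^ 2 := by
      rw [a_eq m]; ring
    have : 0 ≤ 2 * m * (A (m + 1) - A m) ^ 2 := by positivity
    push_cast
    linarith [sq_nonneg (A (m + 1) - 2 * a m)]

theorem sq_mul_card_mul_le_sum_le {c : ℝ} (hc : 0 ≤ c) (a : ℕ → ℝ) (M : ℕ) :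
    c ^ 2 * #{n ∈ Icc 1 M | c * n ≤ ∑ k ∈ range n, a k} ≤ 4 * ∑ k ∈ range M, a k ^ 2 := by
  refine le_trans ?_ (sum_sq_average_le a M)
  calc c ^ 2 * #{n ∈ Icc 1 M | c * n ≤ ∑ k ∈ range n, a k}
      = ∑ n ∈ Icc 1 M with c * n ≤ ∑ k ∈ range n, a k, c ^ 2 := by
        rw [sum_const, nsmul_eq_mul, mul_comm]
    _ ≤ ∑ n ∈ Icc 1 M with c * n ≤ ∑ k ∈ range n, a k, ((∑ k ∈ range n, a k) / n) ^ 2 := by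
        refine sum_le_sum fun n hn ↦ pow_le_pow_left₀ hc ?_ 2
        obtain ⟨hn, h⟩ := mem_filter.1 hn
        have : 0 < n := (mem_Icc.1 hn).1
        rwa [le_div_iff₀ (by positivity)]
    _ ≤ ∑ n ∈ Icc 1 M, ((∑ k ∈ range n, a k) / n) ^ 2 :=
        sum_le_sum_of_subset_of_nonneg (filter_subset _ _) fun _ _ _ ↦ sq_nonneg _

/-! ### Energy of two consecutive turns -/

/-- Truncation of a real number to the interval `[-r, r]`. -/
noncomputable def clampTo (r x : ℝ) : ℝ := max (-r) (min r x)

theorem abs_clampTo_sub_le (r x y : ℝ) : |clampTo r x - clampTo r y| ≤ |x - y| := by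
  refine (abs_max_sub_max_le_max _ _ _ _).trans (max_le (by simp) ?_)
  exact (abs_min_sub_min_le_max _ _ _ _).trans (max_le (by simp) le_rfl)

theorem clampTo_eq_of_le {r x : ℝ} (hr : 0 ≤ r) (h : r ≤ x) : clampTo r x = r := by
  rw [clampTo, min_eq_left h, max_eq_right (by linarith)]

theorem clampTo_eq_of_le_neg {r x : ℝ} (h : x ≤ -r) : clampTo r x = -r :=
  max_eq_left ((min_le_right _ _).trans h)

theorem clampTo_eq_clampTo {r R x y : ℝ} (hr : 0 ≤ r) (hx : R ≤ |x|) (hxy : |y - x| ≤ R - r) :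
    clampTo r y = clampTo r x := by
  rw [abs_le] at hxy
  rcases le_abs'.1 hx with h | h
  · rw [clampTo_eq_of_le_neg (by linarith), clampTo_eq_of_le_neg (by linarith)]
  · rw [clampTo_eq_of_le hr (by linarith), clampTo_eq_of_le hr (by linarith)]

/-- Energy of three consecutive spins of a chain, as a function of the two angles `a`, `b` by which
the chain turns between them. -/
noncomputable def turnEnergy (δ a b : ℝ) : ℝ :=
  (cos a + cos b - 2 * (1 - δ)) ^ 2 + (sin b - sin a) ^ 2

theorem turnEnergy_nonneg (δ a b : ℝ) : 0 ≤ turnEnergy δ a b := by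
  unfold turnEnergy; positivity

theorem turnEnergy_comm (δ a b : ℝ) : turnEnergy δ a b = turnEnergy δ b a := by
  unfold turnEnergy; ring

theorem cos_le_one_sub_sq_div_five {a : ℝ} (ha : |a| ≤ 1) : cos a ≤ 1 - a ^ 2 / 5 := by
  have h := cos_le_one_sub_mul_cos_sq (x := a) (by linarith [pi_gt_three])
  have : 1 / 5 ≤ 2 / π ^ 2 := by
    rw [div_le_div_iff₀ (by norm_num) (by positivity)]
    nlinarith [pi_lt_d2, pi_pos]
  nlinarith [sq_nonneg a]

theorem sq_sub_div_four_le_sq_sin_sub_sin {a b : ℝ} (ha : |a| ≤ 1) (hb : |b| ≤ 1) :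
    (b - a) ^ 2 / 4 ≤ (sin b - sin a) ^ 2 := by
  wlog hab : a ≤ b generalizing a b
  · convert this hb ha (le_of_not_ge hab) using 1 <;> ring
  have half_le_cos (x : ℝ) (hx : x ∈ interior (Set.Icc (-1 : ℝ) 1)) : 1 / 2 ≤ deriv sin x := by
    rw [Real.deriv_sin]
    obtain ⟨h_lower, h_upper⟩ := interior_subset hx
    nlinarith [one_sub_sq_div_two_le_cos (x := x)]
  have h := (convex_Icc (-1 : ℝ) 1).mul_sub_le_image_sub_of_le_deriv continuous_sin.continuousOn
    differentiable_sin.differentiableOn half_le_cos a (abs_le.1 ha) b (abs_le.1 hb) hab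
  nlinarith

theorem sq_mul_sq_max_le_turnEnergy {s a b : ℝ} (hs : 0 ≤ s) (ha : |a| ≤ 1) :
    s ^ 2 * max (|a| - 4 * s) 0 ^ 2 ≤ 12 * turnEnergy (s ^ 2) a b := by
  rcases le_total (|a|) (4 * s) with h | h
  · rw [max_eq_right (by linarith), zero_pow two_ne_zero, mul_zero]
    linarith [turnEnergy_nonneg (s ^ 2) a b]
  rw [max_eq_left (by linarith)]
  have excess_le : (|a| - 4 * s) ^ 2 ≤ a ^ 2 := by rw [← sq_abs a]; gcongr; linarith
  have s_le : 16 * s ^ 2 ≤ a ^ 2 := by rw [← sq_abs a]; nlinarith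
  have defect_ge : a ^ 2 * (3 / 40) ≤ 2 * (1 - s ^ 2) - cos a - cos b := by
    linarith [cos_le_one_sub_sq_div_five ha, cos_le_one b]
  calc s ^ 2 * (|a| - 4 * s) ^ 2 ≤ a ^ 2 / 16 * a ^ 2 := by gcongr; linarith
    _ ≤ 12 * (a ^ 2 * (3 / 40)) ^ 2 := by nlinarith [sq_nonneg (a ^ 2)]
    _ ≤ 12 * (2 * (1 - s ^ 2) - cos a - cos b) ^ 2 := by gcongr
    _ ≤ 12 * turnEnergy (s ^ 2) a b := by
      unfold turnEnergy; nlinarith [sq_nonneg (sin b - sin a)]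

theorem pow_four_add_sq_le_turnEnergy {s a b : ℝ} (ha : |a| ≤ s) (hb : |b| ≤ s) :
    s ^ 4 + (sin b - sin a) ^ 2 ≤ turnEnergy (s ^ 2) a b := by
  have defect_ge : s ^ 2 ≤ cos a + cos b - 2 * (1 - s ^ 2) := by
    linarith [one_sub_sq_div_two_le_cos (x := a), one_sub_sq_div_two_le_cos (x := b),
      sq_le_sq' (abs_le.1 ha).1 (abs_le.1 ha).2, sq_le_sq' (abs_le.1 hb).1 (abs_le.1 hb).2]
  have := pow_le_pow_left₀ (sq_nonneg s) defect_ge 2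
  unfold turnEnergy
  linarith

-- A discrete Modica–Mortola inequality: the wells of `turnEnergy (s ^ 2)` lie near `a = b = ±√2 s`,
-- and truncating below their level makes the motion near and beyond them free of charge.
theorem sq_mul_abs_clampTo_sub_le {s a b : ℝ} (hs : 0 ≤ s) (hs1 : s ≤ 1 / 2) (ha : |a| ≤ 1)
    (hb : |b| ≤ 1) :
    s ^ 2 * |clampTo (3 / 4 * s) b - clampTo (3 / 4 * s) a| ≤ 8 * turnEnergy (s ^ 2) a b := by
  wlog hab : |a| ≤ |b| generalizing a b
  · rw [turnEnergy_comm, abs_sub_comm]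
    exact this hb ha (le_of_not_ge hab)
  have sin_sub := sq_sub_div_four_le_sq_sin_sub_sin ha hb
  have lipschitz : s ^ 2 * |clampTo (3 / 4 * s) b - clampTo (3 / 4 * s) a| ≤ s ^ 2 * |b - a| :=
    mul_le_mul_of_nonneg_left (abs_clampTo_sub_le _ b a) (sq_nonneg s)
  rcases le_total |b| s with small | large
  · calc _ ≤ s ^ 2 * |b - a| := lipschitz
      _ ≤ s ^ 4 + (b - a) ^ 2 / 4 := by
        rw [← sq_abs (b - a)]; nlinarith [sq_nonneg (s ^ 2 - |b - a| / 2)]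
      _ ≤ turnEnergy (s ^ 2) a b := by
        linarith [pow_four_add_sq_le_turnEnergy (hab.trans small) small]
      _ ≤ 8 * turnEnergy (s ^ 2) a b := by linarith [turnEnergy_nonneg (s ^ 2) a b]
  rcases le_total |b - a| (s / 4) with close | far
  · have := clampTo_eq_clampTo (r := 3 / 4 * s) (y := a) (by positivity) large
      (by rw [abs_sub_comm]; linarith)
    rw [this, sub_self, abs_zero, mul_zero]
    linarith [turnEnergy_nonneg (s ^ 2) a b]
  · calc _ ≤ s ^ 2 * |b - a| := lipschitz
      _ ≤ 8 * ((b - a) ^ 2 / 4) := by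
        have : s ^ 2 ≤ 2 * |b - a| := by nlinarith
        rw [← sq_abs (b - a)]
        nlinarith [abs_nonneg (b - a)]
      _ ≤ 8 * turnEnergy (s ^ 2) a b := by
        unfold turnEnergy; nlinarith [sq_nonneg (cos a + cos b - 2 * (1 - s ^ 2))]

/-! ### Chains of spins -/

theorem abs_sub_le_sum_abs_sub (f : ℕ → ℝ) {k m n : ℕ} (hk : k ≤ n) (hm : m ≤ n) :
    |f k - f m| ≤ ∑ l ∈ range n, |f (l + 1) - f l| := by
  wlog hkm : k ≤ m generalizing k m
  · rw [abs_sub_comm]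
    exact this hm hk (le_of_not_ge hkm)
  calc |f k - f m| ≤ ∑ l ∈ Ico k m, |f (l + 1) - f l| := by
        simpa only [Real.dist_eq, abs_sub_comm] using dist_le_Ico_sum_dist f hkm
    _ ≤ ∑ l ∈ range n, |f (l + 1) - f l| := by
        refine sum_le_sum_of_subset_of_nonneg (fun l hl ↦ ?_) fun _ _ _ ↦ abs_nonneg _
        exact mem_range.2 ((mem_Ico.1 hl).2.trans_le hm)

theorem exists_lt_abs_of_sum_turnEnergy_lt {s : ℝ} {d : ℕ → ℝ} {n : ℕ}
    (h : ∑ k ∈ range n, turnEnergy (s ^ 2) (d k) (d (k + 1)) < n * s ^ 4) :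
    ∃ m ≤ n, s < |d m| := by
  contrapose! h
  calc n * s ^ 4 = ∑ k ∈ range n, s ^ 4 := by simp
    _ ≤ _ := by
      refine sum_le_sum fun k hk ↦ ?_
      have hk := mem_range.1 hk
      linarith [pow_four_add_sq_le_turnEnergy (h k hk.le) (h (k + 1) hk),
        sq_nonneg (sin (d (k + 1)) - sin (d k))]

theorem abs_clampTo_sub_lt_of_sum_turnEnergy_lt {s : ℝ} (hs : 0 < s) (hs1 : s ≤ 1 / 2)
    {d : ℕ → ℝ} {k m n : ℕ} (hd : ∀ k ≤ n, |d k| ≤ 1)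
    (h : ∑ k ∈ range n, turnEnergy (s ^ 2) (d k) (d (k + 1)) < s ^ 3 / 32)
    (hk : k ≤ n) (hm : m ≤ n) :
    |clampTo (3 / 4 * s) (d k) - clampTo (3 / 4 * s) (d m)| < s / 4 := by
  refine lt_of_mul_lt_mul_left ?_ (sq_nonneg s)
  calc s ^ 2 * |clampTo (3 / 4 * s) (d k) - clampTo (3 / 4 * s) (d m)|
      ≤ ∑ l ∈ range n, s ^ 2 * |clampTo (3 / 4 * s) (d (l + 1)) - clampTo (3 / 4 * s) (d l)| := by
        rw [← mul_sum]
        gcongr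
        exact abs_sub_le_sum_abs_sub (fun l ↦ clampTo (3 / 4 * s) (d l)) hk hm
    _ ≤ ∑ l ∈ range n, 8 * turnEnergy (s ^ 2) (d l) (d (l + 1)) := by
        refine sum_le_sum fun l hl ↦ ?_
        have hl := mem_range.1 hl
        exact sq_mul_abs_clampTo_sub_le hs.le hs1 (hd l hl.le) (hd (l + 1) hl)
    _ < s ^ 2 * (s / 4) := by rw [← mul_sum]; linarith

theorem forall_lt_or_forall_lt_neg_of_sum_turnEnergy_lt {s : ℝ} (hs : 0 < s) (hs1 : s ≤ 1 / 2)
    {d : ℕ → ℝ} {n : ℕ} (hd : ∀ k ≤ n, |d k| ≤ 1)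
    (h_wall : ∑ k ∈ range n, turnEnergy (s ^ 2) (d k) (d (k + 1)) < s ^ 3 / 32)
    (h_flat : ∑ k ∈ range n, turnEnergy (s ^ 2) (d k) (d (k + 1)) < n * s ^ 4) :
    (∀ k ≤ n, s / 2 < d k) ∨ ∀ k ≤ n, d k < -(s / 2) := by
  obtain ⟨m, hm, steep⟩ := exists_lt_abs_of_sum_turnEnergy_lt h_flat
  have close (k : ℕ) (hk : k ≤ n) :=
    abs_lt.1 (abs_clampTo_sub_lt_of_sum_turnEnergy_lt hs hs1 hd h_wall hk hm)
  rcases lt_abs.1 steep with h | h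
  · refine .inl fun k hk ↦ ?_
    have clamp_m : clampTo (3 / 4 * s) (d m) = 3 / 4 * s :=
      clampTo_eq_of_le (by positivity) (by linarith)
    have clamp_k : s / 2 < clampTo (3 / 4 * s) (d k) := by linarith [close k hk]
    exact (lt_min_iff.1 ((lt_max_iff.1 clamp_k).resolve_left (by linarith))).2
  · refine .inr fun k hk ↦ ?_
    have clamp_m : clampTo (3 / 4 * s) (d m) = -(3 / 4 * s) := clampTo_eq_of_le_neg (by linarith)
    have clamp_k : clampTo (3 / 4 * s) (d k) < -(s / 2) := by linarith [close k hk]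
    exact (min_lt_iff.1 (max_lt_iff.1 clamp_k).2).resolve_left (by linarith)

/-- Energy of the triple of consecutive spins `x`, `y`, `z`. -/
def tripleEnergy (δ : ℝ) (x y z : ℝ × ℝ) : ℝ := sqnorm (x - (2 * (1 - δ)) • y + z)

/-- Energy of the finite chain of spins `w 0, …, w (n - 1)`. The truncated subtraction is harmless:
a chain of fewer than three spins has no energy. -/
def chainEnergy (δ : ℝ) (w : ℕ → ℝ × ℝ) (n : ℕ) : ℝ :=
  ∑ k ∈ range (n - 2), tripleEnergy δ (w k) (w (k + 1)) (w (k + 2))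

/-- The spin obtained from `(0, 1)` by a counterclockwise rotation through the angle `α`, so that
the boundary value of the problem corresponds to the angle `0`. -/
noncomputable def spinOfAngle (α : ℝ) : ℝ × ℝ := (-sin α, cos α)

theorem tripleEnergy_nonneg (δ : ℝ) (x y z : ℝ × ℝ) : 0 ≤ tripleEnergy δ x y z := by
  unfold tripleEnergy sqnorm; positivity

theorem tripleEnergy_spinOfAngle (δ α β γ : ℝ) :
    tripleEnergy δ (spinOfAngle α) (spinOfAngle β) (spinOfAngle γ)
      = turnEnergy δ (β - α) (γ - β) := by
  simp only [tripleEnergy, spinOfAngle, sqnorm, turnEnergy, cos_sub, sin_sub, Prod.fst_add,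
    Prod.fst_sub, Prod.snd_add, Prod.snd_sub, Prod.smul_fst, Prod.smul_snd, smul_eq_mul]
  linear_combination (4 * (1 - δ) ^ 2 - (cos α + cos γ) ^ 2 - (sin α + sin γ) ^ 2)
    * sin_sq_add_cos_sq β

theorem chainEnergy_nonneg (δ : ℝ) (w : ℕ → ℝ × ℝ) (n : ℕ) : 0 ≤ chainEnergy δ w n :=
  sum_nonneg fun _ _ ↦ tripleEnergy_nonneg _ _ _ _

theorem tripleEnergy_le_chainEnergy (δ : ℝ) (w : ℕ → ℝ × ℝ) {k n : ℕ} (hk : k + 2 < n) :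
    tripleEnergy δ (w k) (w (k + 1)) (w (k + 2)) ≤ chainEnergy δ w n :=
  single_le_sum (f := fun k ↦ tripleEnergy δ (w k) (w (k + 1)) (w (k + 2)))
    (fun _ _ ↦ tripleEnergy_nonneg _ _ _ _) (mem_range.2 (Nat.lt_sub_of_add_lt hk))

theorem chainEnergy_mono (δ : ℝ) (w : ℕ → ℝ × ℝ) : Monotone (chainEnergy δ w) := fun _ _ h ↦
  sum_le_sum_of_subset_of_nonneg (range_mono (Nat.sub_le_sub_right h 2))
    fun _ _ _ ↦ tripleEnergy_nonneg _ _ _ _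

theorem chainEnergy_add_le (δ : ℝ) (w : ℕ → ℝ × ℝ) (m n : ℕ) :
    chainEnergy δ w m + chainEnergy δ (fun k ↦ w (m + k)) n ≤ chainEnergy δ w (m + n) := by
  rcases lt_or_ge n 2 with hn | hn
  · have : chainEnergy δ (fun k ↦ w (m + k)) n = 0 := by
      rw [chainEnergy, Nat.sub_eq_zero_of_le hn.le, range_zero, sum_empty]
    rw [this, add_zero]
    exact chainEnergy_mono δ w (Nat.le_add_right m n)
  · calc _ ≤ chainEnergy δ w (m + 2) + chainEnergy δ (fun k ↦ w (m + k)) n := by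
          gcongr; exact chainEnergy_mono δ w (Nat.le_add_right m 2)
      _ = chainEnergy δ w (m + n) := by
          simp only [chainEnergy, Nat.add_sub_cancel, Nat.add_sub_assoc hn, sum_range_add,
            add_assoc]

theorem chainEnergy_spinOfAngle (δ : ℝ) (ψ : ℕ → ℝ) (n : ℕ) :
    chainEnergy δ (spinOfAngle ∘ ψ) n
      = ∑ k ∈ range (n - 2), turnEnergy δ (ψ (k + 1) - ψ k) (ψ (k + 2) - ψ (k + 1)) := by
  simp only [chainEnergy, Function.comp_apply, tripleEnergy_spinOfAngle]

theorem pow_four_mul_card_lt_abs_le_chainEnergy {s : ℝ} (hs : 0 ≤ s) {ψ : ℕ → ℝ} {M : ℕ}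
    (h0 : ψ 0 = 0) (hψ : ∀ k < M, |ψ (k + 1) - ψ k| ≤ 1) :
    s ^ 4 * #{i ∈ Icc 1 M | 5 * s * (i : ℕ) < |ψ i|}
      ≤ 48 * chainEnergy (s ^ 2) (spinOfAngle ∘ ψ) (M + 2) := by
  set excess : ℕ → ℝ := fun k ↦ max (|ψ (k + 1) - ψ k| - 4 * s) 0
  have abs_le (i : ℕ) : |ψ i| ≤ 4 * s * i + ∑ k ∈ range i, excess k := by
    calc |ψ i| ≤ ∑ k ∈ range i, |ψ (k + 1) - ψ k| := by
          simpa only [h0, sub_zero] using abs_sub_le_sum_abs_sub ψ le_rfl i.zero_le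
      _ ≤ ∑ k ∈ range i, (4 * s + excess k) :=
          sum_le_sum fun k _ ↦ sub_le_iff_le_add'.1 (le_max_left _ _)
      _ = _ := by rw [sum_add_distrib, sum_const, card_range, nsmul_eq_mul, mul_comm]
  have card_le : #{i ∈ Icc 1 M | 5 * s * (i : ℕ) < |ψ i|}
      ≤ #{i ∈ Icc 1 M | s * (i : ℕ) ≤ ∑ k ∈ range i, excess k} :=
    card_le_card <| monotone_filter_right _ fun i _ hi ↦ by linarith [abs_le i]
  calc s ^ 4 * #{i ∈ Icc 1 M | 5 * s * (i : ℕ) < |ψ i|}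
      ≤ s ^ 2 * (s ^ 2 * #{i ∈ Icc 1 M | s * (i : ℕ) ≤ ∑ k ∈ range i, excess k}) := by
        rw [← mul_assoc, ← pow_add]; gcongr
    _ ≤ s ^ 2 * (4 * ∑ k ∈ range M, excess k ^ 2) :=
        mul_le_mul_of_nonneg_left (sq_mul_card_mul_le_sum_le hs excess M) (sq_nonneg s)
    _ = 4 * ∑ k ∈ range M, s ^ 2 * excess k ^ 2 := by rw [← mul_sum]; ring
    _ ≤ 4 * ∑ k ∈ range M,
          12 * turnEnergy (s ^ 2) (ψ (k + 1) - ψ k) (ψ (k + 2) - ψ (k + 1)) :=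
        mul_le_mul_of_nonneg_left (sum_le_sum fun k hk ↦
          sq_mul_sq_max_le_turnEnergy hs (hψ k (mem_range.1 hk))) (by norm_num)
    _ = 48 * chainEnergy (s ^ 2) (spinOfAngle ∘ ψ) (M + 2) := by
        rw [chainEnergy_spinOfAngle, ← mul_sum, Nat.add_sub_cancel]; ring

/-! ### Penalized energy of a column -/

/-- Energy of the chain of spins with angles `ψ 0, …, ψ (n - 1)`, plus a penalty `s ^ 4` for each
angle outside `[-R, R]`. It is the trade-off that is optimized on the columns of the lattice, where
the horizontal energy provides the penalty. -/
noncomputable def penalizedEnergy (s R : ℝ) (ψ : ℕ → ℝ) (n : ℕ) : ℝ :=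
  chainEnergy (s ^ 2) (spinOfAngle ∘ ψ) n + s ^ 4 * Nat.count (fun k ↦ R < |ψ k|) n

theorem penalizedEnergy_nonneg (s R : ℝ) (ψ : ℕ → ℝ) (n : ℕ) : 0 ≤ penalizedEnergy s R ψ n := by
  have := chainEnergy_nonneg (s ^ 2) (spinOfAngle ∘ ψ) n
  unfold penalizedEnergy; positivity

theorem penalizedEnergy_add_le (s R : ℝ) (ψ : ℕ → ℝ) (m n : ℕ) :
    penalizedEnergy s R ψ m + penalizedEnergy s R (fun k ↦ ψ (m + k)) n
      ≤ penalizedEnergy s R ψ (m + n) := by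
  simp only [penalizedEnergy, Nat.count_add, Nat.cast_add]
  linarith [chainEnergy_add_le (s ^ 2) (spinOfAngle ∘ ψ) m n,
    show chainEnergy (s ^ 2) (spinOfAngle ∘ fun k ↦ ψ (m + k)) n
      = chainEnergy (s ^ 2) (fun k ↦ (spinOfAngle ∘ ψ) (m + k)) n from rfl]

theorem nat_mul_le_penalizedEnergy {s R c : ℝ} {ψ : ℕ → ℝ} {L q : ℕ}
    (h : ∀ b < q, c ≤ penalizedEnergy s R (fun k ↦ ψ (b * L + k)) L) :
    q * c ≤ penalizedEnergy s R ψ (q * L) := by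
  induction q with
  | zero => simpa using penalizedEnergy_nonneg s R ψ 0
  | succ q ih =>
    have := ih fun b hb ↦ h b (hb.trans q.lt_succ_self)
    rw [Nat.succ_mul]
    push_cast
    linarith [penalizedEnergy_add_le s R ψ (q * L) L, h q q.lt_succ_self]

theorem card_abs_le_le {c R : ℝ} (hc : 0 < c) {m n : ℕ} (hR : 2 * R ≤ c * m) {ψ : ℕ → ℝ}
    (hψ : ∀ k, k + 1 < n → c ≤ ψ (k + 1) - ψ k) :
    #{k ∈ range n | |ψ k| ≤ R} ≤ m + 1 := by
  have separated : MonotoneOn (fun k ↦ ψ k - c * k) (Set.Iio n) := by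
    refine monotoneOn_of_le_add_one Set.ordConnected_Iio fun k _ _ hk ↦ ?_
    have := hψ k hk
    push_cast
    linarith
  rcases (range n).filter (|ψ ·| ≤ R) |>.eq_empty_or_nonempty with h | h
  · simp [h]
  obtain ⟨k, hk, k_le⟩ := exists_min_image _ id h
  have subset : {k ∈ range n | |ψ k| ≤ R} ⊆ Icc k (k + m) := by
    intro l hl
    have hkl : k ≤ l := k_le l hl
    rw [mem_filter, mem_range, abs_le] at hk hl
    have h1 := separated hk.1 hl.1 hkl
    have h2 : c * l ≤ c * (k + m) := by dsimp only at h1; linarith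
    exact mem_Icc.2 ⟨hkl, by exact_mod_cast le_of_mul_le_mul_left h2 hc⟩
  simpa [add_assoc] using card_le_card subset

theorem le_count_lt_abs_of_forall_le_sub {s : ℝ} (hs : 0 < s) {i : ℕ} {ψ : ℕ → ℝ}
    (h : ∀ k, k + 1 < 64 * i → s / 2 ≤ ψ (k + 1) - ψ k) :
    i ≤ Nat.count (fun k ↦ 5 * s * i < |ψ k|) (64 * i) := by
  have few : #{k ∈ range (64 * i) | |ψ k| ≤ 5 * s * i} ≤ 20 * i + 1 :=
    card_abs_le_le (half_pos hs) (by push_cast; linarith) h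
  have total := card_filter_add_card_filter_not (s := range (64 * i)) (|ψ ·| ≤ 5 * s * i)
  simp only [not_le, card_range] at total
  rw [Nat.count_eq_card_filter_range]
  omega

theorem pow_four_mul_div_le_penalizedEnergy_block {s : ℝ} (hs : 0 < s) (hs1 : s ≤ 1 / 2) {i : ℕ}
    (hi : 1 ≤ i) {ψ : ℕ → ℝ} (hψ : ∀ k, k + 1 < 64 * i → |ψ (k + 1) - ψ k| ≤ 1) :
    s ^ 4 * (i / (1 + s * i)) / 32 ≤ penalizedEnergy s (5 * s * i) ψ (64 * i) := by
  have cost_le_wall : s ^ 4 * (i / (1 + s * i)) ≤ s ^ 3 := by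
    rw [← mul_div_assoc, div_le_iff₀ (by positivity)]
    nlinarith [pow_pos hs 3]
  have cost_le_flat : s ^ 4 * (i / (1 + s * i)) ≤ s ^ 4 * i := by
    gcongr
    exact div_le_self (by positivity) (le_add_of_nonneg_right (by positivity))
  have : 0 ≤ s ^ 4 * i := by positivity
  have energy_nonneg := chainEnergy_nonneg (s ^ 2) (spinOfAngle ∘ ψ) (64 * i)
  have penalty_nonneg : 0 ≤ s ^ 4 * Nat.count (fun k ↦ 5 * s * i < |ψ k|) (64 * i) := by positivity
  have energy_eq := chainEnergy_spinOfAngle (s ^ 2) ψ (64 * i)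
  unfold penalizedEnergy
  rcases le_or_gt (s ^ 3 / 32) (chainEnergy (s ^ 2) (spinOfAngle ∘ ψ) (64 * i)) with h_wall | h_wall
  · linarith
  rcases le_or_gt ((64 * i - 2 : ℕ) * s ^ 4) (chainEnergy (s ^ 2) (spinOfAngle ∘ ψ) (64 * i))
    with h_flat | h_flat
  · have : s ^ 4 * i ≤ (64 * i - 2 : ℕ) * s ^ 4 := by
      rw [mul_comm]; gcongr; omega
    linarith
  suffices i ≤ Nat.count (fun k ↦ 5 * s * i < |ψ k|) (64 * i) by
    have : s ^ 4 * i ≤ s ^ 4 * Nat.count (fun k ↦ 5 * s * i < |ψ k|) (64 * i) := by gcongr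
    linarith
  rw [energy_eq] at h_wall h_flat
  rcases forall_lt_or_forall_lt_neg_of_sum_turnEnergy_lt hs hs1 (d := fun k ↦ ψ (k + 1) - ψ k)
    (fun k hk ↦ hψ k (by omega)) h_wall h_flat with increasing | decreasing
  · exact le_count_lt_abs_of_forall_le_sub hs fun k hk ↦ (increasing k (by omega)).le
  · have := le_count_lt_abs_of_forall_le_sub hs (i := i) (ψ := fun k ↦ -ψ k)
      fun k hk ↦ by linarith [decreasing k (by omega)]
    simpa only [abs_neg] using this

theorem pow_four_mul_div_le_penalizedEnergy {s : ℝ} (hs : 0 < s) (hs1 : s ≤ 1 / 2) {i n : ℕ}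
    (hi : 1 ≤ i) (hin : 64 * i ≤ n) {ψ : ℕ → ℝ} (hψ : ∀ k, k + 1 < n → |ψ (k + 1) - ψ k| ≤ 1) :
    s ^ 4 * (n / (1 + s * i)) / (128 * 32) ≤ penalizedEnergy s (5 * s * i) ψ n := by
  set q := n / (64 * i)
  have hq : 1 ≤ q := (Nat.one_le_div_iff (by omega)).2 hin
  have q_mul_le : q * (64 * i) ≤ n := Nat.div_mul_le_self n (64 * i)
  have n_le : n ≤ 128 * (q * i) := by
    have := Nat.lt_div_mul_add (a := n) (b := 64 * i) (by omega)
    have := Nat.mul_le_mul_right i hq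
    change n < q * (64 * i) + 64 * i at *
    linarith
  calc s ^ 4 * (n / (1 + s * i)) / (128 * 32)
      ≤ s ^ 4 * ((128 * (q * i) : ℕ) / (1 + s * i)) / (128 * 32) := by gcongr
    _ = q * (s ^ 4 * (i / (1 + s * i)) / 32) := by push_cast; ring
    _ ≤ penalizedEnergy s (5 * s * i) ψ (q * (64 * i)) := by
        refine nat_mul_le_penalizedEnergy fun b hb ↦ ?_
        have := Nat.mul_le_mul_right (64 * i) (Nat.succ_le_of_lt hb)
        rw [Nat.succ_mul] at this
        exact pow_four_mul_div_le_penalizedEnergy_block hs hs1 hi fun k hk ↦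
          hψ (b * (64 * i) + k) (by omega)
    _ ≤ penalizedEnergy s (5 * s * i) ψ n := by
        have := penalizedEnergy_add_le s (5 * s * i) ψ (q * (64 * i)) (n - q * (64 * i))
        rw [Nat.add_sub_cancel' q_mul_le] at this
        linarith [penalizedEnergy_nonneg s (5 * s * i) (fun k ↦ ψ (q * (64 * i) + k))
          (n - q * (64 * i))]

/-! ### Lattices of angles -/

/-- Energy of the `n × n` lattice of spins `v i j` with unit spacing: the chain energies of its rows
`v · j` and of its columns `v i`, added up. -/
def latticeEnergy (δ : ℝ) (v : ℕ → ℕ → ℝ × ℝ) (n : ℕ) : ℝ :=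
  ∑ j ∈ range n, chainEnergy δ (v · j) n + ∑ i ∈ range n, chainEnergy δ (v i) n

theorem chainEnergy_row_le_latticeEnergy (δ : ℝ) (v : ℕ → ℕ → ℝ × ℝ) {n j : ℕ} (hj : j < n) :
    chainEnergy δ (v · j) n ≤ latticeEnergy δ v n :=
  (single_le_sum (f := fun j ↦ chainEnergy δ (v · j) n) (fun _ _ ↦ chainEnergy_nonneg _ _ _)
    (mem_range.2 hj)).trans
      (le_add_of_nonneg_right (sum_nonneg fun _ _ ↦ chainEnergy_nonneg _ _ _))

theorem chainEnergy_column_le_latticeEnergy (δ : ℝ) (v : ℕ → ℕ → ℝ × ℝ) {n i : ℕ} (hi : i < n) :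
    chainEnergy δ (v i) n ≤ latticeEnergy δ v n :=
  (single_le_sum (f := fun i ↦ chainEnergy δ (v i) n) (fun _ _ ↦ chainEnergy_nonneg _ _ _)
    (mem_range.2 hi)).trans
      (le_add_of_nonneg_left (sum_nonneg fun _ _ ↦ chainEnergy_nonneg _ _ _))

theorem chainEnergy_congr {δ : ℝ} {w w' : ℕ → ℝ × ℝ} {n : ℕ} (h : ∀ k < n, w k = w' k) :
    chainEnergy δ w n = chainEnergy δ w' n := by
  refine sum_congr rfl fun k hk ↦ ?_
  have := mem_range.1 hk
  rw [h k (by omega), h (k + 1) (by omega), h (k + 2) (by omega)]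

theorem latticeEnergy_congr {δ : ℝ} {v v' : ℕ → ℕ → ℝ × ℝ} {n : ℕ}
    (h : ∀ i < n, ∀ j < n, v i j = v' i j) : latticeEnergy δ v n = latticeEnergy δ v' n := by
  unfold latticeEnergy
  congr 1
  · exact sum_congr rfl fun j hj ↦ chainEnergy_congr fun i hi ↦ h i hi j (mem_range.1 hj)
  · exact sum_congr rfl fun i hi ↦ chainEnergy_congr (h i (mem_range.1 hi))

theorem sum_penalizedEnergy_le_latticeEnergy {s : ℝ} (hs : 0 ≤ s) {M n : ℕ} (hM : M + 2 ≤ n)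
    {φ : ℕ → ℕ → ℝ} (h0 : ∀ j < n, φ 0 j = 0)
    (h_row : ∀ i j, i + 1 < n → j < n → |φ (i + 1) j - φ i j| ≤ 1) :
    ∑ i ∈ Icc 1 M, penalizedEnergy s (5 * s * (i : ℕ)) (φ i) n
      ≤ 48 * latticeEnergy (s ^ 2) (fun i j ↦ spinOfAngle (φ i j)) n := by
  have columns : ∑ i ∈ Icc 1 M, chainEnergy (s ^ 2) (spinOfAngle ∘ φ i) n
      ≤ ∑ i ∈ range n, chainEnergy (s ^ 2) (spinOfAngle ∘ φ i) n := by
    refine sum_le_sum_of_subset_of_nonneg (fun i hi ↦ ?_) fun _ _ _ ↦ chainEnergy_nonneg _ _ _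
    rw [mem_Icc] at hi
    exact mem_range.2 (by omega)
  have rows (j : ℕ) (hj : j ∈ range n) : s ^ 4 * #{i ∈ Icc 1 M | 5 * s * (i : ℕ) < |φ i j|}
      ≤ 48 * chainEnergy (s ^ 2) (spinOfAngle ∘ (φ · j)) n := by
    rw [mem_range] at hj
    refine (pow_four_mul_card_lt_abs_le_chainEnergy hs (h0 j hj)
      fun i hi ↦ h_row i j (by omega) hj).trans ?_
    gcongr
    exact chainEnergy_mono _ _ hM
  have double_count : ∑ i ∈ Icc 1 M, Nat.count (fun j ↦ 5 * s * (i : ℕ) < |φ i j|) n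
      = ∑ j ∈ range n, #{i ∈ Icc 1 M | 5 * s * (i : ℕ) < |φ i j|} := by
    simp only [Nat.count_eq_card_filter_range]
    exact sum_card_bipartiteAbove_eq_sum_card_bipartiteBelow _
  calc ∑ i ∈ Icc 1 M, penalizedEnergy s (5 * s * (i : ℕ)) (φ i) n
      = ∑ i ∈ Icc 1 M, chainEnergy (s ^ 2) (spinOfAngle ∘ φ i) n
        + ∑ j ∈ range n, s ^ 4 * #{i ∈ Icc 1 M | 5 * s * (i : ℕ) < |φ i j|} := by
        simp only [penalizedEnergy, sum_add_distrib, ← mul_sum, ← Nat.cast_sum, double_count]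
    _ ≤ ∑ i ∈ range n, chainEnergy (s ^ 2) (spinOfAngle ∘ φ i) n
        + ∑ j ∈ range n, 48 * chainEnergy (s ^ 2) (spinOfAngle ∘ (φ · j)) n :=
        add_le_add columns (sum_le_sum rows)
    _ ≤ 48 * latticeEnergy (s ^ 2) (fun i j ↦ spinOfAngle (φ i j)) n := by
        have : 0 ≤ ∑ i ∈ range n, chainEnergy (s ^ 2) (spinOfAngle ∘ φ i) n :=
          sum_nonneg fun _ _ ↦ chainEnergy_nonneg _ _ _
        change _ ≤ 48 * (∑ j ∈ range n, chainEnergy (s ^ 2) (spinOfAngle ∘ (φ · j)) n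
          + ∑ i ∈ range n, chainEnergy (s ^ 2) (spinOfAngle ∘ φ i) n)
        rw [← mul_sum]
        linarith

theorem log_sub_log_le_sum {s : ℝ} (hs : 0 ≤ s) (M : ℕ) :
    log (1 + s * (M + 1)) - log (1 + s) ≤ ∑ i ∈ Icc 1 M, s / (1 + s * i) := by
  induction M with
  | zero => simp
  | succ m ih =>
    rw [sum_Icc_succ_top (by omega)]
    push_cast
    have hp : 0 < 1 + s * ((m : ℝ) + 1) := by positivity
    have hq : 0 < 1 + s * ((m : ℝ) + 1 + 1) := by positivity
    have increment : log (1 + s * ((m : ℝ) + 1 + 1)) - log (1 + s * ((m : ℝ) + 1))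
        ≤ s / (1 + s * ((m : ℝ) + 1)) := by
      rw [← log_div hq.ne' hp.ne']
      refine (log_le_sub_one_of_pos (div_pos hq hp)).trans_eq ?_
      field_simp
      ring
    linarith

theorem pow_three_mul_log_le_latticeEnergy_spinOfAngle {s : ℝ} (hs : 0 < s) (hs1 : s ≤ 1 / 2)
    {n : ℕ} (hn : 64 ≤ n) {φ : ℕ → ℕ → ℝ} (h0 : ∀ j < n, φ 0 j = 0)
    (h_row : ∀ i j, i + 1 < n → j < n → |φ (i + 1) j - φ i j| ≤ 1)
    (h_column : ∀ i j, i < n → j + 1 < n → |φ i (j + 1) - φ i j| ≤ 1) :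
    s ^ 3 * n * log (1 + s * n / 256) / (48 * 128 * 32)
      ≤ latticeEnergy (s ^ 2) (fun i j ↦ spinOfAngle (φ i j)) n := by
  set M := n / 64
  have log_le : log (1 + s * n / 256) ≤ ∑ i ∈ Icc 1 M, s / (1 + s * i) := by
    refine le_trans ?_ (log_sub_log_le_sum hs.le M)
    have n_le : s * n ≤ s * (128 * M) := by gcongr; exact_mod_cast (by omega : n ≤ 128 * M)
    rw [← log_div (by positivity) (by positivity)]
    refine log_le_log (by positivity) ?_
    have : s * M * s ≤ s * M * (1 / 2) := by gcongr
    rw [le_div_iff₀ (by positivity)]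
    nlinarith
  have column (i : ℕ) (hi : i ∈ Icc 1 M) :
      s ^ 4 * (n / (1 + s * i)) / (128 * 32) ≤ penalizedEnergy s (5 * s * i) (φ i) n := by
    rw [mem_Icc] at hi
    exact pow_four_mul_div_le_penalizedEnergy hs hs1 hi.1 (by omega) fun j ↦
      h_column i j (by omega)
  have total := (sum_le_sum column).trans
    (sum_penalizedEnergy_le_latticeEnergy hs.le (M := M) (by omega) h0 h_row)
  have : s ^ 3 * n * log (1 + s * n / 256) / (128 * 32)
      ≤ ∑ i ∈ Icc 1 M, s ^ 4 * (n / (1 + s * (i : ℕ))) / (128 * 32) := by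
    calc s ^ 3 * n * log (1 + s * n / 256) / (128 * 32)
        ≤ s ^ 3 * n * (∑ i ∈ Icc 1 M, s / (1 + s * (i : ℕ))) / (128 * 32) := by gcongr
      _ = _ := by
        rw [mul_sum, sum_div]
        exact sum_congr rfl fun i _ ↦ by ring
  linarith

/-! ### Angles of a spin field -/

theorem dotp_sq_le (a b : ℝ × ℝ) : dotp a b ^ 2 ≤ sqnorm a * sqnorm b := by
  unfold dotp sqnorm; linarith [sq_nonneg (a.1 * b.2 - a.2 * b.1)]

theorem dotp_le_one {a b : ℝ × ℝ} (ha : sqnorm a = 1) (hb : sqnorm b = 1) : dotp a b ≤ 1 :=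
  (abs_le_one_iff_mul_self_le_one.2 (by nlinarith [dotp_sq_le a b])) |> abs_le.1 |>.2

theorem dotp_spinOfAngle (α β : ℝ) : dotp (spinOfAngle α) (spinOfAngle β) = cos (β - α) := by
  rw [cos_sub]; simp only [dotp, spinOfAngle]; ring

theorem le_dotp_of_tripleEnergy_lt {δ : ℝ} (hδ : δ ≤ 1 / 10) {x y z : ℝ × ℝ} (hx : sqnorm x = 1)
    (hy : sqnorm y = 1) (hz : sqnorm z = 1) (h : tripleEnergy δ x y z < 1 / 100) :
    3 / 5 ≤ dotp x y ∧ 3 / 5 ≤ dotp y z := by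
  have proj_eq : dotp (x - (2 * (1 - δ)) • y + z) y = dotp x y + dotp y z - 2 * (1 - δ) := by
    have : dotp (x - (2 * (1 - δ)) • y + z) y
        = dotp x y + dotp y z - 2 * (1 - δ) * sqnorm y := by
      simp only [dotp, sqnorm, Prod.fst_add, Prod.fst_sub, Prod.snd_add, Prod.snd_sub,
        Prod.smul_fst, Prod.smul_snd, smul_eq_mul]
      ring
    rw [this, hy, mul_one]
  have proj_sq_le := dotp_sq_le (x - (2 * (1 - δ)) • y + z) y
  rw [proj_eq, hy, mul_one] at proj_sq_le
  change _ ≤ tripleEnergy δ x y z at proj_sq_le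
  have proj_gt : -(1 / 10) < dotp x y + dotp y z - 2 * (1 - δ) :=
    (abs_lt_of_sq_lt_sq' (by linarith) (by norm_num)).1
  constructor <;> linarith [dotp_le_one hx hy, dotp_le_one hy hz]

theorem le_dotp_of_chainEnergy_lt {δ : ℝ} (hδ : δ ≤ 1 / 10) {w : ℕ → ℝ × ℝ} {n : ℕ} (hn : 3 ≤ n)
    (hw : ∀ k < n, sqnorm (w k) = 1) (h : chainEnergy δ w n < 1 / 100) {k : ℕ} (hk : k + 1 < n) :
    3 / 5 ≤ dotp (w k) (w (k + 1)) := by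
  have triple (m : ℕ) (hm : m + 2 < n) :=
    le_dotp_of_tripleEnergy_lt hδ (hw m (by omega)) (hw (m + 1) (by omega)) (hw (m + 2) hm)
      ((tripleEnergy_le_chainEnergy δ w hm).trans_lt h)
  rcases k with _ | m
  · exact (triple 0 hn).1
  · exact (triple m hk).2

theorem exists_spinOfAngle_eq (α : ℝ) {b : ℝ × ℝ} (hb : sqnorm b = 1) :
    ∃ β, b = spinOfAngle β ∧ |β - α| ≤ π := by
  set z : ℂ := ⟨b.2, -b.1⟩
  have norm_z : ‖z‖ = 1 := by
    have : b.1 ^ 2 + b.2 ^ 2 = 1 := hb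
    rw [Complex.norm_def, Complex.normSq_mk, sqrt_eq_one]
    linarith
  have angle_eq : ((α + Real.Angle.toReal (z.arg - α : ℝ) : ℝ) : Real.Angle) = z.arg := by simp
  refine ⟨α + Real.Angle.toReal (z.arg - α : ℝ), ?_, ?_⟩
  · rw [spinOfAngle, ← Real.Angle.sin_coe, ← Real.Angle.cos_coe, angle_eq, Real.Angle.sin_coe,
      Real.Angle.cos_coe, Complex.sin_arg, Complex.cos_arg (norm_ne_zero_iff.1 (by simp [norm_z])),
      norm_z]
    simp [z]
  · rw [add_sub_cancel_left]
    exact Real.Angle.abs_toReal_le_pi _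

theorem exists_angles (v : ℕ → ℝ × ℝ) :
    ∃ φ : ℕ → ℝ, φ 0 = 0 ∧ (∀ i, |φ (i + 1) - φ i| ≤ π) ∧
      ∀ i, sqnorm (v (i + 1)) = 1 → v (i + 1) = spinOfAngle (φ (i + 1)) := by
  have exists_next (i : ℕ) (α : ℝ) :
      ∃ β, |β - α| ≤ π ∧ (sqnorm (v (i + 1)) = 1 → v (i + 1) = spinOfAngle β) := by
    by_cases h : sqnorm (v (i + 1)) = 1
    · obtain ⟨β, hβ, hβα⟩ := exists_spinOfAngle_eq α h
      exact ⟨β, hβα, fun _ ↦ hβ⟩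
    · exact ⟨α, by simp [pi_nonneg], fun h' ↦ absurd h' h⟩
  choose next abs_next_sub_le next_spec using exists_next
  refine ⟨Nat.rec 0 next, rfl, fun i ↦ abs_next_sub_le _ _, fun i hi ↦ ?_⟩
  exact next_spec i _ hi

theorem abs_le_one_of_le_cos {x : ℝ} (hx : |x| ≤ π) (hcos : 3 / 5 ≤ cos x) : |x| ≤ 1 := by
  by_contra! h
  have := cos_lt_cos_of_nonneg_of_le_pi zero_le_one hx h
  rw [cos_abs] at this
  linarith [cos_one_le]

theorem exists_latticeAngles {n : ℕ} {v : ℕ → ℕ → ℝ × ℝ} (h0 : ∀ j < n, v 0 j = (0, 1))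
    (hv : ∀ i < n, ∀ j < n, sqnorm (v i j) = 1)
    (h_row : ∀ i j, i + 1 < n → j < n → 3 / 5 ≤ dotp (v i j) (v (i + 1) j))
    (h_column : ∀ i j, i < n → j + 1 < n → 3 / 5 ≤ dotp (v i j) (v i (j + 1))) :
    ∃ φ : ℕ → ℕ → ℝ, (∀ j, φ 0 j = 0) ∧ (∀ i < n, ∀ j < n, v i j = spinOfAngle (φ i j)) ∧
      (∀ i j, i + 1 < n → j < n → |φ (i + 1) j - φ i j| ≤ 1) ∧
      ∀ i j, i < n → j + 1 < n → |φ i (j + 1) - φ i j| ≤ 1 := by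
  choose φ φ_zero φ_step φ_spec using fun j ↦ exists_angles (v · j)
  have v_eq (i : ℕ) (hi : i < n) (j : ℕ) (hj : j < n) : v i j = spinOfAngle (φ j i) := by
    cases i with
    | zero => simp [h0 j hj, φ_zero, spinOfAngle]
    | succ i => exact φ_spec j i (hv (i + 1) hi j hj)
  have row (i j : ℕ) (hi : i + 1 < n) (hj : j < n) : |φ j (i + 1) - φ j i| ≤ 1 := by
    refine abs_le_one_of_le_cos (φ_step j i) ?_
    simpa only [v_eq i (by omega) j hj, v_eq (i + 1) hi j hj, dotp_spinOfAngle]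
      using h_row i j hi hj
  refine ⟨fun i j ↦ φ j i, φ_zero, v_eq, row, fun i j hi hj ↦ ?_⟩
  induction i with
  | zero => simp [φ_zero]
  | succ i ih =>
    refine abs_le_one_of_le_cos ?_ ?_
    · have h1 := abs_le.1 (row i j hi (by omega))
      have h2 := abs_le.1 (row i (j + 1) hi hj)
      have h3 := abs_le.1 (ih (by omega))
      exact abs_le.2 ⟨by linarith [pi_gt_three], by linarith [pi_gt_three]⟩
    · simpa only [v_eq (i + 1) hi j (by omega), v_eq (i + 1) hi (j + 1) hj, dotp_spinOfAngle]
        using h_column (i + 1) j hi hj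

theorem min_pow_three_mul_log_le_latticeEnergy {s : ℝ} (hs : 0 < s) (hs1 : s ^ 2 ≤ 1 / 10) {n : ℕ}
    (hn : 64 ≤ n) {v : ℕ → ℕ → ℝ × ℝ} (h0 : ∀ j < n, v 0 j = (0, 1))
    (hv : ∀ i < n, ∀ j < n, sqnorm (v i j) = 1) :
    min (1 / 100) (s ^ 3 * n * log (1 + s * n / 256) / (48 * 128 * 32))
      ≤ latticeEnergy (s ^ 2) v n := by
  rcases le_or_gt (1 / 100) (latticeEnergy (s ^ 2) v n) with large | small
  · exact (min_le_left _ _).trans large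
  obtain ⟨φ, φ_zero, v_eq, row, column⟩ := exists_latticeAngles h0 hv
    (fun i j hi hj ↦ le_dotp_of_chainEnergy_lt hs1 (by omega) (fun i hi ↦ hv i hi j hj)
      ((chainEnergy_row_le_latticeEnergy _ v hj).trans_lt small) hi)
    (fun i j hi hj ↦ le_dotp_of_chainEnergy_lt hs1 (by omega) (hv i hi)
      ((chainEnergy_column_le_latticeEnergy _ v hi).trans_lt small) hj)
  rw [latticeEnergy_congr v_eq]
  exact (min_le_right _ _).trans <| pow_three_mul_log_le_latticeEnergy_spinOfAngle hs
    (by nlinarith) hn (fun j _ ↦ φ_zero j) row column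

/-! ### Scaling to the lattice of spacing `ε` -/

theorem four_mul_sq_le_latticeEnergy {δ : ℝ} {n : ℕ} (hn : 3 ≤ n) {v : ℕ → ℕ → ℝ × ℝ}
    (h0 : ∀ j < n, v 0 j = (0, 1)) : 4 * δ ^ 2 ≤ latticeEnergy δ v n :=
  calc 4 * δ ^ 2 = tripleEnergy δ (v 0 0) (v 0 1) (v 0 2) := by
        rw [h0 0 (by omega), h0 1 (by omega), h0 2 hn]
        simp [tripleEnergy, sqnorm]
        ring
    _ ≤ chainEnergy δ (v 0) n := tripleEnergy_le_chainEnergy δ (v 0) (k := 0) hn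
    _ ≤ latticeEnergy δ v n := chainEnergy_column_le_latticeEnergy δ v (by omega)

theorem sum_Icc_intCast (F : ℤ → ℝ) (K : ℤ) :
    ∑ k ∈ Icc 0 K, F k = ∑ k ∈ range (K + 1).toNat, F k := by
  simp [Int.Icc_eq_finset_map, sum_map]

theorem E_eq_latticeEnergy (ε δ : ℝ) (u : ℤ × ℤ → ℝ × ℝ) :
    E ε δ u = ε ^ 2 / 2 * latticeEnergy δ (fun i j ↦ u (i, j)) ⌈1 / ε⌉₊ := by
  have card_range : (Kof ε + 1).toNat = ⌈1 / ε⌉₊ := by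
    rw [Kof, sub_add_cancel, Int.ceil_toNat]
  have card_range_sub : (Kof ε - 2 + 1).toNat = ⌈1 / ε⌉₊ - 2 := by
    rw [← card_range]; omega
  rw [E, Ehor, Ever, IdxH, IdxV, sum_product_right, sum_product, latticeEnergy, ← mul_add]
  simp only [sum_Icc_intCast, card_range, card_range_sub, chainEnergy, tripleEnergy, Nat.cast_add,
    Nat.cast_one, Nat.cast_ofNat]

theorem log_one_add_le_nat_mul_log {y : ℝ} (hy : 0 ≤ y) {m : ℕ} (hm : m ≠ 0) :
    log (1 + y) ≤ m * log (1 + y / m) := by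
  rw [← log_pow]
  refine log_le_log (by positivity) ?_
  have h := one_add_mul_le_pow (a := y / m) (by linarith [div_nonneg hy m.cast_nonneg]) m
  rwa [mul_div_cancel₀ _ (Nat.cast_ne_zero.2 hm)] at h

theorem min_abs_log_add_one_le {y : ℝ} (hy : 0 < y) :
    min y (|log y| + 1) ≤ 3 * log (1 + y) := by
  rcases le_total y 1 with h | h
  · calc min y (|log y| + 1) ≤ y := min_le_left _ _
      _ ≤ 3 * (1 - (1 + y)⁻¹) := by
        rw [← sub_nonneg]
        have : 3 * (1 - (1 + y)⁻¹) - y = y * (2 - y) / (1 + y) := by field_simp; ring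
        rw [this]
        exact div_nonneg (mul_nonneg hy.le (by linarith)) (by linarith)
      _ ≤ 3 * log (1 + y) := by gcongr; exact one_sub_inv_le_log_of_pos (by positivity)
  · refine (min_le_right _ _).trans ?_
    rw [abs_of_nonneg (log_nonneg h)]
    linarith [log_le_log hy (by linarith : y ≤ 1 + y),
      log_le_log two_pos (by linarith : 2 ≤ 1 + y), log_two_gt_d9]

theorem min_pow_four_le_log {ε s : ℝ} (hε : 0 < ε) (hs : 0 < s) :
    min (s ^ 4) (ε * s ^ 3 * (|log (ε / s)| + 1)) ≤ 768 * (ε * s ^ 3 * log (1 + s / ε / 256)) := by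
  have hy : 0 < s / ε := div_pos hs hε
  calc min (s ^ 4) (ε * s ^ 3 * (|log (ε / s)| + 1))
      = ε * s ^ 3 * min (s / ε) (|log (s / ε)| + 1) := by
        rw [mul_min_of_nonneg _ _ (by positivity), ← inv_div s ε, log_inv, abs_neg]
        congr 1
        field_simp
    _ ≤ ε * s ^ 3 * (3 * log (1 + s / ε)) := by gcongr; exact min_abs_log_add_one_le hy
    _ ≤ ε * s ^ 3 * (3 * ((256 : ℕ) * log (1 + s / ε / (256 : ℕ)))) := by
        gcongr; exact log_one_add_le_nat_mul_log hy.le (by norm_num)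
    _ = 768 * (ε * s ^ 3 * log (1 + s / ε / 256)) := by push_cast; ring

theorem natCast_mem_Icc_Kof {ε : ℝ} {k : ℕ} (hk : k < ⌈1 / ε⌉₊) : (k : ℤ) ∈ Icc 0 (Kof ε) := by
  have : (k : ℤ) < ⌈1 / ε⌉ := Int.lt_ceil.2 (by exact_mod_cast Nat.lt_ceil.1 hk)
  rw [Kof, mem_Icc]
  omega

theorem InS0.sqnorm_eq_one {ε : ℝ} {u : ℤ × ℤ → ℝ × ℝ} (hu : InS0 ε u) {i j : ℕ}
    (hi : i < ⌈1 / ε⌉₊) (hj : j < ⌈1 / ε⌉₊) : sqnorm (u (i, j)) = 1 :=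
  hu.1 _ (mem_product.2 ⟨natCast_mem_Icc_Kof hi, natCast_mem_Icc_Kof hj⟩)

theorem InS0.eq_zero_one {ε : ℝ} {u : ℤ × ℤ → ℝ × ℝ} (hu : InS0 ε u) {j : ℕ}
    (hj : j < ⌈1 / ε⌉₊) : u ((0 : ℕ), j) = (0, 1) :=
  hu.2 j (natCast_mem_Icc_Kof hj)

theorem two_mul_sq_mul_sq_le_E {ε δ : ℝ} (hε0 : 0 < ε) (hε : ε < 1 / 2) {u : ℤ × ℤ → ℝ × ℝ}
    (hu : InS0 ε u) : 2 * ε ^ 2 * δ ^ 2 ≤ E ε δ u := by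
  have three_le : 3 ≤ ⌈1 / ε⌉₊ := by
    refine Nat.lt_ceil.2 ?_
    rw [lt_div_iff₀ hε0]
    push_cast
    linarith
  rw [E_eq_latticeEnergy]
  calc 2 * ε ^ 2 * δ ^ 2 = ε ^ 2 / 2 * (4 * δ ^ 2) := by ring
    _ ≤ _ := by
      gcongr
      exact four_mul_sq_le_latticeEnergy three_le fun j hj ↦ hu.eq_zero_one hj

theorem min_pow_four_div_le_E {ε s : ℝ} (hs : 0 < s) (hsε : s ^ 2 ≤ ε) (hε : ε ≤ 1 / 64)
    {u : ℤ × ℤ → ℝ × ℝ} (hu : InS0 ε u) :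
    min (s ^ 4) (ε * s ^ 3 * (|log (ε / s)| + 1)) / (2 * 48 * 128 * 32 * 768)
      ≤ E ε (s ^ 2) u := by
  have hε0 : 0 < ε := (pow_pos hs 2).trans_le hsε
  set n := ⌈1 / ε⌉₊
  have le_n : 1 / ε ≤ n := Nat.le_ceil _
  have n_ge : 64 ≤ n := by
    have : (64 : ℝ) ≤ 1 / ε := by rw [le_div_iff₀ hε0]; linarith
    exact_mod_cast this.trans le_n
  have log_term : 1 / ε * s ^ 3 * log (1 + s / ε / 256) ≤ s ^ 3 * n * log (1 + s * n / 256) := by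
    have : s / ε ≤ s * n := by rw [div_eq_mul_one_div]; gcongr
    rw [mul_comm (1 / ε)]
    gcongr
    exact log_nonneg (le_add_of_nonneg_right (by positivity))
  rw [E_eq_latticeEnergy]
  rcases min_le_iff.1 (min_pow_three_mul_log_le_latticeEnergy hs (hsε.trans (by linarith)) n_ge
    (v := fun i j ↦ u (i, j)) (fun j hj ↦ hu.eq_zero_one hj)
    fun i hi j hj ↦ hu.sqnorm_eq_one hi hj) with h | h
  · calc _ ≤ s ^ 4 / 200 := by
          have := min_le_left (s ^ 4) (ε * s ^ 3 * (|log (ε / s)| + 1))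
          linarith [pow_pos hs 4]
      _ ≤ ε ^ 2 / 200 := by
          have := pow_le_pow_left₀ (sq_nonneg s) hsε 2
          linarith
      _ = ε ^ 2 / 2 * (1 / 100) := by ring
      _ ≤ _ := by gcongr
  · calc _ ≤ 768 * (ε * s ^ 3 * log (1 + s / ε / 256)) / (2 * 48 * 128 * 32 * 768) := by
          gcongr; exact min_pow_four_le_log hε0 hs
      _ = ε ^ 2 / 2 * (1 / ε * s ^ 3 * log (1 + s / ε / 256) / (48 * 128 * 32)) := by field_simp
      _ ≤ ε ^ 2 / 2 * (s ^ 3 * n * log (1 + s * n / 256) / (48 * 128 * 32)) := by gcongr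
      _ ≤ _ := by gcongr

theorem lower_bound_small_delta_general :
    ∃ cl : ℝ, 0 < cl ∧ ∀ ε δ : ℝ, 0 < δ → δ ≤ ε → ε < 1 / 2 →
      ∀ u : ℤ × ℤ → ℝ × ℝ, InS0 ε u →
        cl * min (δ ^ 2) (ε * (δ * √δ) * (|log (ε / √δ)| + 1)) ≤ E ε δ u := by
  refine ⟨1 / (2 * 48 * 128 * 32 * 768), by norm_num, fun ε δ hδ hδε hε u hu ↦ ?_⟩
  obtain ⟨s, hs, rfl⟩ : ∃ s, 0 < s ∧ δ = s ^ 2 := ⟨√δ, sqrt_pos.2 hδ, (sq_sqrt hδ.le).symm⟩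
  rw [sqrt_sq hs.le]
  rcases le_or_gt ε (1 / 64) with fine | coarse
  · convert min_pow_four_div_le_E hs hδε fine hu using 1
    ring_nf
  · calc _ ≤ 1 / (2 * 48 * 128 * 32 * 768) * (s ^ 2) ^ 2 := by gcongr; exact min_le_left _ _
      _ ≤ 2 * (1 / 64) ^ 2 * (s ^ 2) ^ 2 := by gcongr; norm_num
      _ ≤ 2 * ε ^ 2 * (s ^ 2) ^ 2 := by gcongr
      _ ≤ E ε (s ^ 2) u := two_mul_sq_mul_sq_le_E (by linarith) hε hu

/-- Lemma 5.9: lower bound for small `δ`, with `η = 1/(2·4·12²·256)`. -/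
theorem lower_bound_small_delta :
    ∃ cl : ℝ, 0 < cl ∧ ∀ ε δ : ℝ,
      δ ∈ Set.Ioo (0 : ℝ) ((1 / (2 * 4 * 12 ^ 2 * 256)) ^ 2 / 16) →
      ε ∈ Set.Ioo (0 : ℝ) ((1 / (2 * 4 * 12 ^ 2 * 256)) / 4) →
      δ ≤ ε →
      ∀ u : ℤ × ℤ → ℝ × ℝ, InS0 ε u →
        cl * min (δ ^ 2) (ε * (δ * Real.sqrt δ) * (|Real.log (ε / Real.sqrt δ)| + 1))
          ≤ E ε δ u := by
  obtain ⟨cl, hcl, bound⟩ := lower_bound_small_delta_general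
  exact ⟨cl, hcl, fun ε δ hδ hε hδε ↦ bound ε δ hδ.1 hδε (hε.2.trans (by norm_num))⟩
end

section
/- There is a constant C > 0 such that for all ε ∈ (0,1/2) and δ ∈ (0,1) with 2ε ≤ δ^{1/2}, for every integer N ≥ 1 with 2^{−N} ≤ ε/δ^{1/2}, and for every λ ∈ (0, 2^{−N}), there exists a spin field u ∈ S₀(ε) with E_{ε,δ}(u) ≤ C·( N·δ²·λ + δ²·2^{−N} + ε²·δ·N/λ + ε²·δ·2^{−N}/λ² ) (energy estimate for the branching-type competitor, inequality (5.2) in the proof of Proposition 5.1). -/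
open Real Finset

/-!
A ground state turns by `±arccos (1 - δ)` from each spin to the next one, with one sign per lattice
direction. So one looks for an integer potential `F` which vanishes for `x ≤ 0` and has slopes `±1`
in both directions off few points, and takes `arccos (1 - δ) * F` as the phase. The upper envelope
over the scales `h = m, 2 * m, …, 2 ^ N * m` of the tents `dist (y, 2hℤ) - |x - 2h|` is such a
potential: between the columns `2h` and `4h` only the tents of scales `h` and `2h` matter, and their
kinks and their interface have total length `O(n)` in a square of side `n = ⌈1 / ε⌉`.

Averaging `F` over boxes of side `M ≈ δ ^ (-1/2)` keeps the ground states at distance `M` from these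
curves, and makes the phase turn slowly enough for the energy density to be `O(δ ^ 2)` everywhere.
Thus each scale costs `ε ^ 2 * δ ^ 2 * O(n * M) = O(ε * δ ^ (3/2))` and the layer `x < 2 * m`, where
the slopes are not controlled, costs `ε ^ 2 * δ ^ 2 * O(n * m) = O(δ ^ 2 * 2 ^ (-N))`. Finally
`2 * ε * δ ^ (3/2) ≤ δ ^ 2 * λ + ε ^ 2 * δ / λ` for every interface thickness `λ`.
-/

/-- The distance from `y` to the multiples of `d`. -/
def distMultiples (d y : ℤ) : ℤ := min (y % d) (d - y % d)

section DistMultiples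

variable {d : ℤ}

lemma distMultiples_le_abs_sub (hd : 0 < d) (y u : ℤ) : distMultiples d y ≤ |y - u * d| := by
  have hy := Int.emod_add_mul_ediv y d
  rcases le_or_gt u (y / d) with hu | hu
  · refine (min_le_left _ _).trans (le_trans ?_ (le_abs_self _))
    linarith [mul_le_mul_of_nonneg_right hu hd.le]
  · refine (min_le_right _ _).trans (le_trans ?_ (neg_le_abs _))
    linarith [mul_le_mul_of_nonneg_right (Int.add_one_le_of_lt hu) hd.le]

lemma exists_distMultiples_eq_abs_sub (hd : 0 < d) (y : ℤ) :
    ∃ u : ℤ, (u = y / d ∨ u = y / d + 1) ∧ distMultiples d y = |y - u * d| := by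
  have hy := Int.emod_add_mul_ediv y d
  have h0 := Int.emod_nonneg y hd.ne'
  have h1 := Int.emod_lt_of_pos y hd
  rcases le_total (y % d) (d - y % d) with h | h
  · refine ⟨y / d, .inl rfl, ?_⟩
    rw [distMultiples, min_eq_left h, abs_of_nonneg] <;> linarith
  · refine ⟨y / d + 1, .inr rfl, ?_⟩
    rw [distMultiples, min_eq_right h, abs_of_nonpos] <;> linarith

lemma distMultiples_nonneg (hd : 0 < d) (y : ℤ) : 0 ≤ distMultiples d y :=
  le_min (Int.emod_nonneg y hd.ne') (by linarith [Int.emod_lt_of_pos y hd])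

lemma two_mul_distMultiples_le (d y : ℤ) : 2 * distMultiples d y ≤ d := by
  unfold distMultiples; omega

lemma distMultiples_le_of_dvd {d' : ℤ} (hd : 0 < d) (hd' : 0 < d') (h : d ∣ d') (y : ℤ) :
    distMultiples d y ≤ distMultiples d' y := by
  obtain ⟨k, rfl⟩ := h
  obtain ⟨u, -, hu⟩ := exists_distMultiples_eq_abs_sub hd' y
  rw [hu, mul_comm d, ← mul_assoc]
  exact distMultiples_le_abs_sub hd y (u * k)

lemma abs_distMultiples_sub_le (hd : 0 < d) (y z : ℤ) :
    |distMultiples d y - distMultiples d z| ≤ |y - z| := by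
  have one_sided : ∀ y z, distMultiples d y - distMultiples d z ≤ |y - z| := fun y z ↦ by
    obtain ⟨u, -, hu⟩ := exists_distMultiples_eq_abs_sub hd z
    linarith [distMultiples_le_abs_sub hd y u, abs_sub_le y z (u * d)]
  exact abs_sub_le_iff.2 ⟨one_sided y z, abs_sub_comm y z ▸ one_sided z y⟩

/-- The kinks of the distance to `2 * d * ℤ` are the multiples of `d`. -/
lemma exists_distMultiples_two_mul_eq {w j : ℤ} (hd : 0 < d) (hj : w < distMultiples d j) :
    ∃ (t : ℤˣ) (c : ℤ), ∀ y, |y - j| ≤ w → distMultiples (2 * d) y = t * y + c := by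
  have h0 := Int.emod_nonneg j (show 2 * d ≠ 0 by omega)
  have h1 := Int.emod_lt_of_pos j (show 0 < 2 * d by omega)
  have hdiv := Int.emod_add_mul_ediv j (2 * d)
  have far : ∀ u : ℤ, w < |j % (2 * d) - u * d| := fun u ↦ by
    refine hj.trans_le ((distMultiples_le_abs_sub hd j (u + 2 * (j / (2 * d)))).trans_eq ?_)
    congr 1; linear_combination -hdiv
  have far_zero := far 0
  have far_one := far 1
  have far_two := far 2
  rw [lt_abs] at far_zero far_one far_two
  have shift : ∀ y, |y - j| ≤ w → y % (2 * d) = j % (2 * d) + (y - j) := fun y hy ↦ by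
    rw [abs_le] at hy
    rw [← Int.emod_eq_of_lt (a := j % (2 * d) + (y - j)) (b := 2 * d) (by omega) (by omega),
      Int.emod_add_emod, add_sub_cancel]
  rcases lt_or_ge (j % (2 * d)) d with hd' | hd'
  · refine ⟨1, j % (2 * d) - j, fun y hy ↦ ?_⟩
    rw [distMultiples, shift y hy]
    rw [abs_le] at hy
    push_cast; omega
  · refine ⟨-1, 2 * d - j % (2 * d) + j, fun y hy ↦ ?_⟩
    rw [distMultiples, shift y hy]
    rw [abs_le] at hy
    push_cast; omega

end DistMultiples

/-- The building block of scale `h`: a zigzag of period `2 * h` in `y`, dominant near the column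
`x = 2 * h`. -/
def tent (h x y : ℤ) : ℤ := distMultiples (2 * h) y - |x - 2 * h|

section Tent

variable {h x : ℤ}

lemma abs_tent_sub_le (hh : 0 < h) (x x' y y' : ℤ) :
    |tent h x y - tent h x' y'| ≤ |x - x'| + |y - y'| := by
  have hy := abs_distMultiples_sub_le (show 0 < 2 * h by omega) y y'
  have hx := abs_abs_sub_abs_le_abs_sub (x - 2 * h) (x' - 2 * h)
  rw [sub_sub_sub_cancel_right] at hx
  unfold tent
  rw [abs_le] at *
  constructor <;> linarith

lemma tent_nonpos (hh : 0 < h) (hx : x ≤ 0) (y : ℤ) : tent h x y ≤ 0 := by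
  have := two_mul_distMultiples_le (2 * h) y
  rw [tent, abs_of_nonpos] <;> linarith

lemma neg_le_tent (hh : 0 < h) (hx : 2 * h ≤ x) (y : ℤ) : -x ≤ tent h x y := by
  have := distMultiples_nonneg (show 0 < 2 * h by omega) y
  rw [tent, abs_of_nonneg] <;> linarith

lemma tent_le_tent_two_mul (hh : 0 < h) (hx : 4 * h ≤ x) (y : ℤ) :
    tent h x y ≤ tent (2 * h) x y := by
  have := distMultiples_le_of_dvd (d := 2 * h) (d' := 2 * (2 * h)) (by omega) (by omega)
    (dvd_mul_left _ _) y
  rw [tent, tent, abs_of_nonneg, abs_of_nonneg] <;> linarith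

lemma tent_two_mul_le_tent (hh : 0 < h) (hx : x ≤ 2 * h) (y : ℤ) :
    tent (2 * h) x y ≤ tent h x y := by
  have := two_mul_distMultiples_le (2 * (2 * h)) y
  have := distMultiples_nonneg (show 0 < 2 * h by omega) y
  rw [tent, tent, abs_of_nonpos, abs_of_nonpos] <;> linarith

end Tent

/-- The branching potential: the upper envelope of the tents of scales `m, 2 * m, …, 2 ^ N * m`.
The term `-max x 0` makes it vanish for `x ≤ 0`. -/
def branchingPotential (m : ℤ) : ℕ → ℤ → ℤ → ℤ
  | 0, x, y => max (-max x 0) (tent m x y)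
  | k + 1, x, y => max (branchingPotential m k x y) (tent (2 ^ (k + 1) * m) x y)

section BranchingPotential

variable {m : ℤ}

lemma abs_branchingPotential_sub_le (hm : 0 < m) (N : ℕ) (x x' y y' : ℤ) :
    |branchingPotential m N x y - branchingPotential m N x' y'| ≤ |x - x'| + |y - y'| := by
  induction N with
  | zero =>
    refine (abs_max_sub_max_le_max _ _ _ _).trans (max_le ?_ (abs_tent_sub_le hm x x' y y'))
    calc |-max x 0 - -max x' 0| = |max x 0 - max x' 0| := by rw [neg_sub_neg, abs_sub_comm]
      _ ≤ |x - x'| := by simpa using abs_max_sub_max_le_max x 0 x' 0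
      _ ≤ |x - x'| + |y - y'| := le_add_of_nonneg_right (abs_nonneg _)
  | succ k ih =>
    exact (abs_max_sub_max_le_max _ _ _ _).trans
      (max_le ih (abs_tent_sub_le (by positivity) x x' y y'))

lemma branchingPotential_of_nonpos (hm : 0 < m) (N : ℕ) {x : ℤ} (hx : x ≤ 0) (y : ℤ) :
    branchingPotential m N x y = 0 := by
  induction N with
  | zero => rw [branchingPotential, max_eq_right hx, neg_zero, max_eq_left (tent_nonpos hm hx y)]
  | succ k ih => rw [branchingPotential, ih, max_eq_left (tent_nonpos (by positivity) hx y)]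

lemma branchingPotential_eq_tent (hm : 0 < m) (N : ℕ) {x : ℤ} (hx : 2 * (2 ^ N * m) ≤ x) (y : ℤ) :
    branchingPotential m N x y = tent (2 ^ N * m) x y := by
  induction N with
  | zero =>
    rw [pow_zero, one_mul] at *
    rw [branchingPotential, max_eq_left (show 0 ≤ x by omega),
      max_eq_right (neg_le_tent hm hx y)]
  | succ k ih =>
    have hk : 0 < 2 ^ k * m := by positivity
    rw [pow_succ', mul_assoc] at *
    rw [branchingPotential, ih (by linarith), pow_succ', mul_assoc,
      max_eq_right (tent_le_tent_two_mul hk (by linarith) y)]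

lemma tent_le_branchingPotential (m : ℤ) (N : ℕ) (x y : ℤ) :
    tent (2 ^ N * m) x y ≤ branchingPotential m N x y := by
  cases N with
  | zero => rw [pow_zero, one_mul]; exact le_max_right _ _
  | succ k => exact le_max_right _ _

lemma branchingPotential_eq_max_tent (hm : 0 < m) {k N : ℕ} (hk : k < N) {x : ℤ}
    (hx₁ : 2 * (2 ^ k * m) ≤ x) (hx₂ : x ≤ 4 * (2 ^ k * m)) (y : ℤ) :
    branchingPotential m N x y = max (tent (2 ^ k * m) x y) (tent (2 * (2 ^ k * m)) x y) := by
  induction N, hk using Nat.le_induction with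
  | base => rw [branchingPotential, branchingPotential_eq_tent hm k hx₁ y, pow_succ', mul_assoc]
  | succ n hn ih =>
    have hscale : 2 ^ (k + 1) * m ≤ 2 ^ n * m := by gcongr; norm_num
    rw [pow_succ', mul_assoc] at hscale
    rw [branchingPotential, ← ih, pow_succ', mul_assoc, max_eq_left]
    exact (tent_two_mul_le_tent (by positivity) (by linarith) y).trans
      (tent_le_branchingPotential m n x y)

end BranchingPotential

/-- Constant chirality near a lattice point: on the box of radius `w` about `(i, j)` the potential
`F` is affine with both slopes in `{1, -1}`, so that turning by `α * F` follows a single ground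
state. -/
def HasConstantChirality (F : ℤ → ℤ → ℤ) (w i j : ℤ) : Prop :=
  ∃ (s t : ℤˣ) (c : ℤ), ∀ x y, |x - i| ≤ w → |y - j| ≤ w → F x y = s * x + t * y + c

section HasConstantChirality

variable {F G : ℤ → ℤ → ℤ} {w i j : ℤ}

lemma HasConstantChirality.flip (h : HasConstantChirality F w i j) :
    HasConstantChirality (flip F) w j i := by
  obtain ⟨s, t, c, hF⟩ := h
  refine ⟨t, s, c, fun x y hx hy ↦ (hF y x hy hx).trans ?_⟩
  ring

lemma HasConstantChirality.congr (h : HasConstantChirality F w i j)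
    (hFG : ∀ x y, |x - i| ≤ w → |y - j| ≤ w → G x y = F x y) : HasConstantChirality G w i j := by
  obtain ⟨s, t, c, hF⟩ := h
  exact ⟨s, t, c, fun x y hx hy ↦ (hFG x y hx hy).trans (hF x y hx hy)⟩

variable {h : ℤ}

lemma hasConstantChirality_tent_of_left (hh : 0 < h) (hi : i + w ≤ 2 * h)
    (hj : w < distMultiples h j) : HasConstantChirality (tent h) w i j := by
  obtain ⟨t, c, ht⟩ := exists_distMultiples_two_mul_eq hh hj
  refine ⟨1, t, c - 2 * h, fun x y hx hy ↦ ?_⟩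
  rw [tent, ht y hy, abs_of_nonpos (by linarith [le_of_abs_le hx]), Units.val_one]
  ring

lemma hasConstantChirality_tent_of_right (hh : 0 < h) (hi : 2 * h ≤ i - w)
    (hj : w < distMultiples h j) : HasConstantChirality (tent h) w i j := by
  obtain ⟨t, c, ht⟩ := exists_distMultiples_two_mul_eq hh hj
  refine ⟨-1, t, c + 2 * h, fun x y hx hy ↦ ?_⟩
  rw [tent, ht y hy, abs_of_nonneg (by linarith [neg_le_of_abs_le hx]), Units.val_neg,
    Units.val_one]
  ring

/-- Each tent is Lipschitz, so a gap of size `4 * w` at the centre fixes which of two tents is the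
larger one on the whole box. -/
lemma hasConstantChirality_max_tent (hh : 0 < h) (hi₁ : 2 * h ≤ i - w) (hi₂ : i + w ≤ 4 * h)
    (hj : w < distMultiples h j) (hgap : 4 * w < |tent (2 * h) i j - tent h i j|) :
    HasConstantChirality (fun x y ↦ max (tent h x y) (tent (2 * h) x y)) w i j := by
  have hj' : w < distMultiples (2 * h) j :=
    hj.trans_le (distMultiples_le_of_dvd hh (by omega) (dvd_mul_left _ _) j)
  have hlip : ∀ x y, |x - i| ≤ w → |y - j| ≤ w →
      |tent h x y - tent h i j| ≤ 2 * w ∧ |tent (2 * h) x y - tent (2 * h) i j| ≤ 2 * w :=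
    fun x y hx hy ↦ ⟨(abs_tent_sub_le hh ..).trans (by linarith),
      (abs_tent_sub_le (by omega) ..).trans (by linarith)⟩
  rcases lt_abs.1 hgap with hgap | hgap
  · refine (hasConstantChirality_tent_of_left (by omega) (by linarith) hj').congr
      fun x y hx hy ↦ max_eq_right ?_
    obtain ⟨h₁, h₂⟩ := hlip x y hx hy
    linarith [le_of_abs_le h₁, neg_le_of_abs_le h₂]
  · refine (hasConstantChirality_tent_of_right hh hi₁ hj).congr
      fun x y hx hy ↦ max_eq_left ?_
    obtain ⟨h₁, h₂⟩ := hlip x y hx hy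
    linarith [le_of_abs_le h₂, neg_le_of_abs_le h₁]

end HasConstantChirality

/-- The lattice points of `[0, n)²` within distance `w` of the column `x = 2 * h`. -/
noncomputable def columnDefects (w n h : ℤ) : Finset (ℤ × ℤ) :=
  Icc (2 * h - w) (2 * h + w) ×ˢ Ico 0 n

/-- The lattice points of `[0, n)²` in the strip `2 * h ≤ x < 4 * h` within distance `w` of a kink
of the tent of scale `h`. -/
noncomputable def kinkDefects (w n h : ℤ) : Finset (ℤ × ℤ) :=
  Ico (2 * h) (min (4 * h) n) ×ˢ
    (Icc 0 (n / h + 1)).biUnion fun u ↦ Icc (u * h - w) (u * h + w)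

/-- The lattice points near the curve in the strip `2 * h ≤ x ≤ 4 * h` along which the tents of
scales `h` and `2 * h` agree: there their difference is `2 * x` minus a function of `y`. -/
noncomputable def interfaceDefects (w n h : ℤ) : Finset (ℤ × ℤ) :=
  (Ico 0 n).biUnion fun j ↦
    let c := (6 * h + distMultiples (2 * h) j - distMultiples (4 * h) j) / 2
    Icc (c - 2 * w) (c + 2 * w) ×ˢ {j}

/-- A finite set containing all points of `[0, n)²` near which the chirality of the branching
potential changes, together with the boundary layer `x < 2 * m`. -/
noncomputable def defects (m w n : ℤ) (N : ℕ) : Finset (ℤ × ℤ) :=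
  Ico 0 (2 * m) ×ˢ Ico 0 n ∪
    (range (N + 1)).biUnion fun k ↦ columnDefects w n (2 ^ k * m) ∪
      kinkDefects w n (2 ^ k * m) ∪ interfaceDefects w n (2 ^ k * m)

section Defects

variable {w n h i j : ℤ}

lemma lt_distMultiples_of_notMem_kinkDefects (hh : 0 < h) (hi : i ∈ Ico (2 * h) (4 * h))
    (hin : i < n) (hj : j ∈ Ico 0 n) (h_notMem : (i, j) ∉ kinkDefects w n h) :
    w < distMultiples h j := by
  contrapose! h_notMem
  obtain ⟨u, hu, hdist⟩ := exists_distMultiples_eq_abs_sub hh j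
  rw [hdist, abs_le] at h_notMem
  rw [mem_Ico] at hi hj
  have h0 := Int.ediv_nonneg hj.1 hh.le
  have hn := Int.ediv_le_ediv hh hj.2.le
  simp only [kinkDefects, mem_product, mem_biUnion, mem_Ico, mem_Icc, lt_min_iff]
  exact ⟨⟨hi.1, hi.2, hin⟩, u, by omega, by omega, by omega⟩

lemma lt_abs_tent_sub_of_notMem_interfaceDefects (hi : i ∈ Ico (2 * h) (4 * h))
    (hj : j ∈ Ico 0 n) (h_notMem : (i, j) ∉ interfaceDefects w n h) :
    4 * w < |tent (2 * h) i j - tent h i j| := by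
  contrapose! h_notMem
  rw [mem_Ico] at hi
  rw [tent, tent, abs_of_nonpos (show i - 2 * (2 * h) ≤ 0 by omega),
    abs_of_nonneg (show 0 ≤ i - 2 * h by omega), ← mul_assoc, abs_le] at h_notMem
  norm_num only at h_notMem
  simp only [interfaceDefects, mem_product, mem_biUnion, mem_Icc, mem_singleton]
  exact ⟨j, hj, by omega, rfl⟩

lemma exists_scale_mem_Ico {m : ℤ} {N : ℕ} (hi₁ : 2 * m ≤ i) (hi₂ : i < 2 * (2 ^ N * m)) :
    ∃ k < N, i ∈ Ico (2 * (2 ^ k * m)) (4 * (2 ^ k * m)) := by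
  induction N with
  | zero => exact absurd hi₁ (by simpa using hi₂)
  | succ N ih =>
    rcases lt_or_ge i (2 * (2 ^ N * m)) with hi | hi
    · obtain ⟨k, hk, hik⟩ := ih hi
      exact ⟨k, hk.trans N.lt_succ_self, hik⟩
    · exact ⟨N, N.lt_succ_self, mem_Ico.2 ⟨hi, by rw [pow_succ] at hi₂; linarith⟩⟩

lemma lt_abs_sub_of_notMem_columnDefects (hj : j ∈ Ico 0 n)
    (h_notMem : (i, j) ∉ columnDefects w n h) : w < |i - 2 * h| := by
  contrapose! h_notMem
  rw [abs_le] at h_notMem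
  exact mem_product.2 ⟨mem_Icc.2 ⟨by linarith, by linarith⟩, hj⟩

lemma hasConstantChirality_of_notMem_defects {m : ℤ} {N : ℕ} (hm : 0 < m)
    (hn : n ≤ 2 * (2 ^ N * m)) (hi : i ∈ Ico 0 n) (hj : j ∈ Ico 0 n)
    (h_notMem : (i, j) ∉ defects m w n N) :
    HasConstantChirality (branchingPotential m N) w i j := by
  simp only [defects, mem_union, mem_product, mem_biUnion, not_or, not_exists, not_and,
    mem_range] at h_notMem
  obtain ⟨h_layer, h_scale⟩ := h_notMem
  rw [mem_Ico] at hi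
  obtain ⟨k, hk, hik⟩ := exists_scale_mem_Ico (m := m) (N := N) (i := i)
    (not_lt.1 fun hlt ↦ h_layer (mem_Ico.2 ⟨hi.1, hlt⟩) hj) (hi.2.trans_le hn)
  obtain ⟨⟨h_column, h_kink⟩, h_interface⟩ := h_scale k (by omega)
  have h_next := lt_abs_sub_of_notMem_columnDefects hj (h_scale (k + 1) (by omega)).1.1
  have hh : 0 < 2 ^ k * m := by positivity
  replace h_column := lt_abs_sub_of_notMem_columnDefects hj h_column
  replace h_kink := lt_distMultiples_of_notMem_kinkDefects hh hik hi.2 hj h_kink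
  replace h_interface := lt_abs_tent_sub_of_notMem_interfaceDefects hik hj h_interface
  rw [mem_Ico] at hik
  rw [abs_of_nonneg (by linarith)] at h_column
  rw [pow_succ', mul_assoc, abs_of_nonpos (by linarith)] at h_next
  refine (hasConstantChirality_max_tent hh (by linarith) (by linarith) h_kink h_interface).congr
    fun x y hx _ ↦ ?_
  rw [abs_le] at hx
  exact branchingPotential_eq_max_tent hm hk (by linarith) (by linarith) y

lemma card_columnDefects_le (hw : 0 ≤ w) (hn : 0 ≤ n) (h : ℤ) :
    (#(columnDefects w n h) : ℤ) ≤ (2 * w + 1) * n := by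
  rw [columnDefects, card_product, Int.card_Icc, Int.card_Ico]
  push_cast
  rw [Int.toNat_of_nonneg (by linarith), Int.toNat_of_nonneg (by linarith)]
  apply le_of_eq
  ring

lemma card_biUnion_le_mul {ι κ : Type*} [DecidableEq κ] (s : Finset ι) (t : ι → Finset κ) {b : ℤ}
    (hb : ∀ x ∈ s, (#(t x) : ℤ) ≤ b) : (#(s.biUnion t) : ℤ) ≤ #s * b := by
  calc (#(s.biUnion t) : ℤ) ≤ ∑ x ∈ s, (#(t x) : ℤ) := mod_cast card_biUnion_le
    _ ≤ #s • b := sum_le_card_nsmul s _ b hb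
    _ = #s * b := nsmul_eq_mul _ _

lemma card_kinkDefects_le (hw : 0 ≤ w) (hn : 0 ≤ n) (hh : 0 < h) :
    (#(kinkDefects w n h) : ℤ) ≤ 4 * (2 * w + 1) * n := by
  rcases le_or_gt n (2 * h) with hnh | hnh
  · rw [kinkDefects, Ico_eq_empty_of_le ((min_le_right _ _).trans hnh), empty_product, card_empty]
    push_cast; positivity
  have h_cols : (#(Ico (2 * h) (min (4 * h) n)) : ℤ) ≤ 2 * h := by
    rw [Int.card_Ico]; omega
  have h_div := Int.ediv_nonneg hn hh.le
  have h_mul := Int.ediv_mul_le n hh.ne'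
  have h_rows : (#((Icc 0 (n / h + 1)).biUnion fun u ↦ Icc (u * h - w) (u * h + w)) : ℤ) ≤
      (n / h + 2) * (2 * w + 1) := by
    refine (card_biUnion_le_mul _ _ (b := 2 * w + 1) fun u _ ↦ ?_).trans_eq ?_
    · rw [Int.card_Icc]; omega
    · rw [Int.card_Icc, Int.toNat_of_nonneg (by omega)]; ring
  rw [kinkDefects, card_product]
  push_cast
  calc _ ≤ 2 * h * ((n / h + 2) * (2 * w + 1)) := by gcongr
    _ = 2 * (n / h * h + 2 * h) * (2 * w + 1) := by ring
    _ ≤ 2 * (n + n) * (2 * w + 1) := by gcongr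
    _ = 4 * (2 * w + 1) * n := by ring

lemma card_interfaceDefects_le (hw : 0 ≤ w) (hn : 0 ≤ n) (h : ℤ) :
    (#(interfaceDefects w n h) : ℤ) ≤ (4 * w + 1) * n := by
  refine (card_biUnion_le_mul _ _ (b := 4 * w + 1) fun j _ ↦ ?_).trans_eq ?_
  · rw [card_product, Int.card_Icc, card_singleton]; omega
  · rw [Int.card_Ico, Int.toNat_of_nonneg (by omega)]; ring

lemma card_defects_le {m : ℤ} (hm : 0 < m) (hw : 1 ≤ w) (hn : 0 ≤ n) (N : ℕ) :
    (#(defects m w n N) : ℤ) ≤ n * (2 * m + 20 * (N + 1) * w) := by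
  have h_layer : (#(Ico 0 (2 * m) ×ˢ Ico 0 n) : ℤ) = 2 * m * n := by
    rw [card_product, Int.card_Ico, Int.card_Ico]
    push_cast
    rw [Int.toNat_of_nonneg (by omega), Int.toNat_of_nonneg (by omega)]
    ring
  have h_scale : ∀ k ∈ range (N + 1), (#(columnDefects w n (2 ^ k * m) ∪
      kinkDefects w n (2 ^ k * m) ∪ interfaceDefects w n (2 ^ k * m)) : ℤ) ≤ 20 * w * n := by
    intro k _
    have h_column := card_columnDefects_le (w := w) (by omega) hn (2 ^ k * m)
    have h_kink := card_kinkDefects_le (w := w) (h := 2 ^ k * m) (by omega) hn (by positivity)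
    have h_interface := card_interfaceDefects_le (w := w) (by omega) hn (2 ^ k * m)
    have h_union₁ := card_union_le (columnDefects w n (2 ^ k * m) ∪ kinkDefects w n (2 ^ k * m))
      (interfaceDefects w n (2 ^ k * m))
    have h_union₂ := card_union_le (columnDefects w n (2 ^ k * m)) (kinkDefects w n (2 ^ k * m))
    zify at h_union₁ h_union₂
    nlinarith
  have h_union := card_union_le (Ico 0 (2 * m) ×ˢ Ico 0 n) ((range (N + 1)).biUnion fun k ↦
    columnDefects w n (2 ^ k * m) ∪ kinkDefects w n (2 ^ k * m) ∪
      interfaceDefects w n (2 ^ k * m))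
  have h_scales := card_biUnion_le_mul _ _ h_scale
  rw [card_range] at h_scales
  zify at h_union h_scales
  rw [defects]
  linarith

end Defects

/-- The mean of `f` over the window `{i - M + 1, …, i}`. -/
noncomputable def movingAverage (M : ℕ) (f : ℤ → ℝ) (i : ℤ) : ℝ :=
  (∑ a ∈ range M, f (i - a)) / M

section MovingAverage

variable {M : ℕ} {f : ℤ → ℝ} {i : ℤ}

lemma movingAverage_sub (M : ℕ) (f g : ℤ → ℝ) (i : ℤ) :
    movingAverage M f i - movingAverage M g i = movingAverage M (fun x ↦ f x - g x) i := by
  rw [movingAverage, movingAverage, movingAverage, sum_sub_distrib, sub_div]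

lemma movingAverage_eq_of_forall_eq {c : ℝ} (hM : 0 < M) (hf : ∀ x, i - M < x → x ≤ i → f x = c) :
    movingAverage M f i = c := by
  have h_const : ∀ a ∈ range M, f (i - a) = c := fun a ha ↦ by
    rw [mem_range] at ha
    exact hf _ (by omega) (by omega)
  have hM' : (M : ℝ) ≠ 0 := by positivity
  rw [movingAverage, sum_congr rfl h_const, sum_const, card_range, nsmul_eq_mul,
    mul_div_cancel_left₀ _ hM']

lemma abs_movingAverage_le {c : ℝ} (hM : 0 < M) (hf : ∀ x, |f x| ≤ c) (i : ℤ) :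
    |movingAverage M f i| ≤ c := by
  rw [movingAverage, abs_div, Nat.abs_cast, div_le_iff₀ (by positivity)]
  calc |∑ a ∈ range M, f (i - a)| ≤ ∑ a ∈ range M, |f (i - a)| := abs_sum_le_sum_abs _ _
    _ ≤ #(range M) • c := sum_le_card_nsmul _ _ _ fun a _ ↦ hf (i - a)
    _ = c * M := by rw [card_range, nsmul_eq_mul, mul_comm]

lemma movingAverage_add_one_sub (M : ℕ) (f : ℤ → ℝ) (i : ℤ) :
    movingAverage M f (i + 1) - movingAverage M f i = (f (i + 1) - f (i + 1 - M)) / M := by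
  have h_shift : ∀ a ∈ range M, f (i - a) = f (i + 1 - (a + 1 : ℕ)) := fun a _ ↦ by
    congr 1; push_cast; ring
  rw [movingAverage, movingAverage, ← sub_div, sum_congr rfl h_shift, ← sum_sub_distrib,
    sum_range_sub' (fun a : ℕ ↦ f (i + 1 - a)), Nat.cast_zero, sub_zero]

lemma abs_movingAverage_add_one_sub_le (hM : 0 < M) (hf : ∀ x y, |f x - f y| ≤ |(x : ℝ) - y|)
    (i : ℤ) : |movingAverage M f (i + 1) - movingAverage M f i| ≤ 1 := by
  rw [movingAverage_add_one_sub, abs_div, Nat.abs_cast, div_le_one (by positivity)]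
  refine (hf _ _).trans_eq ?_
  push_cast
  rw [sub_sub_cancel, Nat.abs_cast]

lemma abs_movingAverage_second_difference_le (hf : ∀ x y, |f x - f y| ≤ |(x : ℝ) - y|) (i : ℤ) :
    |(movingAverage M f (i + 2) - movingAverage M f (i + 1)) -
      (movingAverage M f (i + 1) - movingAverage M f i)| ≤ 2 / M := by
  have h_unit : ∀ x, |f (x + 1) - f x| ≤ 1 := fun x ↦ by simpa using hf (x + 1) x
  have h_front := h_unit (i + 1)
  have h_back := h_unit (i + 1 - M)
  rw [show i + 2 = i + 1 + 1 by ring, movingAverage_add_one_sub, movingAverage_add_one_sub,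
    ← sub_div, abs_div, Nat.abs_cast]
  gcongr
  rw [show i + 1 + 1 - (M : ℤ) = i + 1 - M + 1 by ring]
  calc _ = |(f (i + 1 + 1) - f (i + 1)) - (f (i + 1 - M + 1) - f (i + 1 - M))| := by
        congr 1; ring
    _ ≤ _ := (abs_sub _ _).trans (by linarith)

end MovingAverage

/-- The mean of `F` over the `M × M` box with upper right corner `(i, j)`. -/
noncomputable def boxAverage (M : ℕ) (F : ℤ → ℤ → ℤ) (i j : ℤ) : ℝ :=
  movingAverage M (fun x ↦ movingAverage M (fun y ↦ (F x y : ℝ)) j) i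

section BoxAverage

variable {M : ℕ} {F : ℤ → ℤ → ℤ}

lemma boxAverage_flip (M : ℕ) (F : ℤ → ℤ → ℤ) (i j : ℤ) :
    boxAverage M (flip F) j i = boxAverage M F i j := by
  simp only [boxAverage, movingAverage, flip, ← sum_div]
  rw [sum_comm]

lemma abs_movingAverage_slice_sub_le (hM : 0 < M) (hF : ∀ x x' y, |F x y - F x' y| ≤ |x - x'|)
    (j x x' : ℤ) :
    |movingAverage M (fun y ↦ (F x y : ℝ)) j - movingAverage M (fun y ↦ (F x' y : ℝ)) j| ≤
      |(x : ℝ) - x'| := by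
  rw [movingAverage_sub]
  exact abs_movingAverage_le hM (fun y ↦ mod_cast hF x x' y) j

lemma abs_boxAverage_add_one_sub_le (hM : 0 < M) (hF : ∀ x x' y, |F x y - F x' y| ≤ |x - x'|)
    (i j : ℤ) : |boxAverage M F (i + 1) j - boxAverage M F i j| ≤ 1 :=
  abs_movingAverage_add_one_sub_le hM (abs_movingAverage_slice_sub_le hM hF j) i

lemma abs_boxAverage_second_difference_le (hM : 0 < M)
    (hF : ∀ x x' y, |F x y - F x' y| ≤ |x - x'|) (i j : ℤ) :
    |(boxAverage M F (i + 2) j - boxAverage M F (i + 1) j) -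
      (boxAverage M F (i + 1) j - boxAverage M F i j)| ≤ 2 / M :=
  abs_movingAverage_second_difference_le (abs_movingAverage_slice_sub_le hM hF j) i

lemma HasConstantChirality.exists_boxAverage_sub_eq {w i j : ℤ}
    (h : HasConstantChirality F w i j) (hM : 0 < M) (hw : M + 1 ≤ w) :
    ∃ s : ℤˣ, boxAverage M F (i + 1) j - boxAverage M F i j = s ∧
      boxAverage M F (i + 2) j - boxAverage M F (i + 1) j = s := by
  obtain ⟨s, t, c, hF⟩ := h
  have hM' : (M : ℝ) ≠ 0 := by positivity
  have h_slice : ∀ x, |x - i| ≤ w → |x - M - i| ≤ w →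
      (movingAverage M (fun y ↦ (F x y : ℝ)) j -
        movingAverage M (fun y ↦ (F (x - M) y : ℝ)) j) / M = s := fun x hx hx' ↦ by
    rw [div_eq_iff hM', movingAverage_sub]
    refine movingAverage_eq_of_forall_eq hM fun y hy₁ hy₂ ↦ ?_
    have hy : |y - j| ≤ w := abs_le.2 ⟨by linarith, by linarith⟩
    rw [hF x y hx hy, hF (x - M) y hx' hy]
    push_cast
    ring
  refine ⟨s, ?_, ?_⟩
  · rw [boxAverage, boxAverage, movingAverage_add_one_sub]
    exact h_slice _ (abs_le.2 ⟨by omega, by omega⟩) (abs_le.2 ⟨by omega, by omega⟩)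
  · rw [show i + 2 = i + 1 + 1 by ring, boxAverage, boxAverage, movingAverage_add_one_sub]
    exact h_slice _ (abs_le.2 ⟨by omega, by omega⟩) (abs_le.2 ⟨by omega, by omega⟩)

end BoxAverage

/-- The unit vector at angle `θ` from the boundary value `(0, 1)`, turning clockwise. -/
noncomputable def spin (θ : ℝ) : ℝ × ℝ := (sin θ, cos θ)

/-- The energy density of three consecutive spins in a lattice direction. -/
noncomputable def helixDefect (δ : ℝ) (u v w : ℝ × ℝ) : ℝ := sqnorm (u - (2 * (1 - δ)) • v + w)

section HelixDefect

variable {δ α β x y z : ℝ}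

lemma helixDefect_spin (δ x y z : ℝ) :
    helixDefect δ (spin x) (spin y) (spin z) =
      (cos (y - x) + cos (z - y) - 2 * (1 - δ)) ^ 2 + (sin (z - y) - sin (y - x)) ^ 2 := by
  obtain ⟨a, rfl⟩ : ∃ a, x = y - a := ⟨y - x, by ring⟩
  obtain ⟨b, rfl⟩ : ∃ b, z = y + b := ⟨z - y, by ring⟩
  simp only [helixDefect, sqnorm, spin, Prod.fst_add, Prod.fst_sub, Prod.snd_add, Prod.snd_sub,
    Prod.smul_fst, Prod.smul_snd, smul_eq_mul, sub_sub_cancel, add_sub_cancel_left, sin_sub,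
    cos_sub, sin_add, cos_add]
  linear_combination
    ((cos a + cos b - 2 * (1 - δ)) ^ 2 + (sin b - sin a) ^ 2) * sin_sq_add_cos_sq y

lemma helixDefect_spin_eq_zero (hα : cos α = 1 - δ) (hxy : y - x = α) (hyz : z - y = α) :
    helixDefect δ (spin x) (spin y) (spin z) = 0 := by
  rw [helixDefect_spin, hxy, hyz, hα]
  ring

lemma helixDefect_spin_le (hαπ : α ≤ π) (hα : cos α = 1 - δ) (hxy : |y - x| ≤ α)
    (hyz : |z - y| ≤ α) (hβ : |(z - y) - (y - x)| ≤ β) :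
    helixDefect δ (spin x) (spin y) (spin z) ≤ (2 * δ) ^ 2 + β ^ 2 := by
  have h_cos : ∀ a, |a| ≤ α → 1 - δ ≤ cos a := fun a ha ↦ by
    rw [← hα, ← cos_abs a]
    exact cos_le_cos_of_nonneg_of_le_pi (abs_nonneg a) hαπ ha
  have h_sin := (abs_sin_sub_sin_le (z - y) (y - x)).trans hβ
  rw [helixDefect_spin]
  refine add_le_add (pow_le_pow_left₀ ?_ ?_ 2) (sq_le_sq.2 (h_sin.trans (le_abs_self β)))
  · linarith [h_cos _ hxy, h_cos _ hyz]
  · linarith [cos_le_one (y - x), cos_le_one (z - y)]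

end HelixDefect

lemma arccos_sq_le {x : ℝ} (hx₁ : -1 ≤ x) (hx₂ : x ≤ 1) :
    arccos x ^ 2 ≤ π ^ 2 / 2 * (1 - x) := by
  have h := cos_le_one_sub_mul_cos_sq (x := arccos x)
    ((abs_of_nonneg (arccos_nonneg x)).trans_le (arccos_le_pi x))
  rw [cos_arccos hx₁ hx₂] at h
  calc arccos x ^ 2 = π ^ 2 / 2 * (2 / π ^ 2 * arccos x ^ 2) := by field_simp
    _ ≤ π ^ 2 / 2 * (1 - x) := by gcongr; linarith

section SmoothedPhase

variable {F : ℤ → ℤ → ℤ} {M : ℕ} {δ : ℝ}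

lemma window_width_pos (hM : 1 ≤ M * √δ) : 0 < M :=
  Nat.cast_pos.1 (pos_of_mul_pos_left (one_pos.trans_le hM) (sqrt_nonneg δ))

lemma helixDefect_boxAverage_le (hδ : δ ∈ Set.Ioc 0 2) (hM : 1 ≤ M * √δ)
    (hF : ∀ x x' y, |F x y - F x' y| ≤ |x - x'|) (i j : ℤ) :
    helixDefect δ (spin (arccos (1 - δ) * boxAverage M F i j))
      (spin (arccos (1 - δ) * boxAverage M F (i + 1) j))
      (spin (arccos (1 - δ) * boxAverage M F (i + 2) j)) ≤ 24 * δ ^ 2 := by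
  obtain ⟨hδ₀, hδ₂⟩ := hδ
  have hM_pos := window_width_pos hM
  have hM_sq : 1 / (M : ℝ) ^ 2 ≤ δ := by
    rw [div_le_iff₀ (by positivity), ← sq_sqrt hδ₀.le, ← mul_pow, mul_comm]
    exact one_le_pow₀ hM
  have h_arccos_sq : arccos (1 - δ) ^ 2 ≤ 5 * δ := by
    have hπ : π ^ 2 ≤ 10 := by nlinarith [pi_lt_d2, pi_pos]
    refine (arccos_sq_le (by linarith) (by linarith)).trans ?_
    nlinarith
  have h_scale : ∀ {t c : ℝ}, |t| ≤ c → |arccos (1 - δ) * t| ≤ arccos (1 - δ) * c := fun ht ↦ by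
    rw [abs_mul, abs_of_nonneg (arccos_nonneg _)]
    exact mul_le_mul_of_nonneg_left ht (arccos_nonneg _)
  have h_next := abs_boxAverage_add_one_sub_le hM_pos hF (i + 1) j
  rw [add_assoc, one_add_one_eq_two] at h_next
  refine (helixDefect_spin_le (β := arccos (1 - δ) * (2 / M)) (arccos_le_pi _)
    (cos_arccos (by linarith) (by linarith)) ?_ ?_ ?_).trans ?_
  · simpa only [mul_sub, mul_one] using h_scale (abs_boxAverage_add_one_sub_le hM_pos hF i j)
  · simpa only [mul_sub, mul_one] using h_scale h_next
  · simpa only [mul_sub] using h_scale (abs_boxAverage_second_difference_le hM_pos hF i j)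
  · calc (2 * δ) ^ 2 + (arccos (1 - δ) * (2 / M)) ^ 2
        = 4 * δ ^ 2 + 4 * (arccos (1 - δ) ^ 2 * (1 / M ^ 2)) := by ring
      _ ≤ 4 * δ ^ 2 + 4 * (5 * δ * δ) := by gcongr
      _ = 24 * δ ^ 2 := by ring

lemma HasConstantChirality.helixDefect_boxAverage_eq_zero {w i j : ℤ}
    (h : HasConstantChirality F w i j) (hδ : δ ∈ Set.Icc 0 2) (hM : 0 < M) (hw : M + 1 ≤ w) :
    helixDefect δ (spin (arccos (1 - δ) * boxAverage M F i j))
      (spin (arccos (1 - δ) * boxAverage M F (i + 1) j))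
      (spin (arccos (1 - δ) * boxAverage M F (i + 2) j)) = 0 := by
  obtain ⟨s, h₁, h₂⟩ := h.exists_boxAverage_sub_eq hM hw
  have h_cos : cos (arccos (1 - δ) * s) = 1 - δ := by
    have h := cos_arccos (x := 1 - δ) (by linarith [hδ.2]) (by linarith [hδ.1])
    rcases Int.units_eq_one_or s with rfl | rfl <;> simpa using h
  refine helixDefect_spin_eq_zero h_cos ?_ ?_
  · rw [← mul_sub, h₁]
  · rw [← mul_sub, h₂]

end SmoothedPhase

lemma sum_le_card_mul_of_eq_zero_of_notMem {ι : Type*} {s t : Finset ι} {f : ι → ℝ} {b : ℝ}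
    (hb : 0 ≤ b) (hf : ∀ p ∈ s, f p ≤ b) (hft : ∀ p ∈ s, p ∉ t → f p = 0) :
    ∑ p ∈ s, f p ≤ #t * b := by
  classical
  have h_vanish : ∀ p ∈ s, p ∉ s ∩ t → f p = 0 := fun p hp hpt ↦
    hft p hp fun ht ↦ hpt (mem_inter.2 ⟨hp, ht⟩)
  calc ∑ p ∈ s, f p = ∑ p ∈ s ∩ t, f p := (sum_subset inter_subset_left h_vanish).symm
    _ ≤ #(s ∩ t) • b := sum_le_card_nsmul _ _ b fun p hp ↦ hf p (mem_inter.1 hp).1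
    _ ≤ #t * b := by
      rw [nsmul_eq_mul]
      gcongr
      exact inter_subset_right

/-- The spin field that turns by `arccos (1 - δ)`, the angle between neighbouring spins of a ground
state, per unit of the box average of the potential `F`. -/
noncomputable def smoothedField (δ : ℝ) (M : ℕ) (F : ℤ → ℤ → ℤ) (p : ℤ × ℤ) : ℝ × ℝ :=
  spin (arccos (1 - δ) * boxAverage M F p.1 p.2)

section SmoothedField

variable {F : ℤ → ℤ → ℤ} {M : ℕ} {ε δ : ℝ}

lemma sqnorm_spin (θ : ℝ) : sqnorm (spin θ) = 1 := sin_sq_add_cos_sq θ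

lemma inS0_smoothedField (hM : 0 < M) (hF : ∀ x ≤ 0, ∀ y, F x y = 0) (ε δ : ℝ) :
    InS0 ε (smoothedField δ M F) := by
  refine ⟨fun _ _ ↦ sqnorm_spin _, fun j _ ↦ ?_⟩
  have h_zero : boxAverage M F 0 j = 0 :=
    movingAverage_eq_of_forall_eq hM fun x _ hx ↦
      movingAverage_eq_of_forall_eq hM fun y _ _ ↦ mod_cast hF x hx y
  rw [smoothedField, h_zero, mul_zero, spin, sin_zero, cos_zero]

variable {s : Finset (ℤ × ℤ)} {w : ℤ}

lemma Ehor_smoothedField_le (hδ : δ ∈ Set.Ioc 0 2) (hM : 1 ≤ M * √δ) (hw : M + 1 ≤ w)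
    (hF : ∀ x x' y, |F x y - F x' y| ≤ |x - x'|)
    (hs : ∀ p ∈ IdxH ε, p ∉ s → HasConstantChirality F w p.1 p.2) :
    Ehor ε δ (smoothedField δ M F) ≤ ε ^ 2 / 2 * (#s * (24 * δ ^ 2)) := by
  refine mul_le_mul_of_nonneg_left
    (sum_le_card_mul_of_eq_zero_of_notMem (by positivity) ?_ ?_) (by positivity)
  · exact fun p _ ↦ helixDefect_boxAverage_le hδ hM hF p.1 p.2
  · exact fun p hp hps ↦ (hs p hp hps).helixDefect_boxAverage_eq_zero ⟨hδ.1.le, hδ.2⟩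
      (window_width_pos hM) hw

lemma Ever_smoothedField_le (hδ : δ ∈ Set.Ioc 0 2) (hM : 1 ≤ M * √δ) (hw : M + 1 ≤ w)
    (hF : ∀ x y y', |F x y - F x y'| ≤ |y - y'|)
    (hs : ∀ p ∈ IdxV ε, p ∉ s → HasConstantChirality F w p.1 p.2) :
    Ever ε δ (smoothedField δ M F) ≤ ε ^ 2 / 2 * (#s * (24 * δ ^ 2)) := by
  refine mul_le_mul_of_nonneg_left
    (sum_le_card_mul_of_eq_zero_of_notMem (by positivity) ?_ ?_) (by positivity)
  · intro p _
    have h := helixDefect_boxAverage_le (F := flip F) hδ hM (fun y y' x ↦ hF x y y') p.2 p.1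
    rwa [boxAverage_flip, boxAverage_flip, boxAverage_flip] at h
  · intro p hp hps
    have h := (hs p hp hps).flip.helixDefect_boxAverage_eq_zero ⟨hδ.1.le, hδ.2⟩
      (window_width_pos hM) hw
    rwa [boxAverage_flip, boxAverage_flip, boxAverage_flip] at h

end SmoothedField

section Competitor

variable {ε δ : ℝ}

lemma E_smoothedField_branchingPotential_le {m : ℤ} {M N : ℕ} (hδ : δ ∈ Set.Ioc 0 2)
    (hm : 0 < m) (hM : 1 ≤ M * √δ) (hN : ⌈1 / ε⌉ ≤ 2 * (2 ^ N * m)) (hε : 0 ≤ ε) :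
    E ε δ (smoothedField δ M (branchingPotential m N)) ≤
      24 * ε ^ 2 * δ ^ 2 * (⌈1 / ε⌉ * (2 * m + 20 * (N + 1) * (M + 1))) := by
  have h_card : (#(defects m (M + 1) ⌈1 / ε⌉ N) : ℝ) ≤
      ⌈1 / ε⌉ * (2 * m + 20 * (N + 1) * (M + 1)) :=
    mod_cast card_defects_le hm (by omega) (Int.ceil_nonneg (by positivity)) N
  have h_lip := abs_branchingPotential_sub_le hm N
  have h_chirality : ∀ p ∈ Idx ε, p ∉ defects m (M + 1) ⌈1 / ε⌉ N →
      HasConstantChirality (branchingPotential m N) (M + 1) p.1 p.2 := fun p hp ↦ by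
    simp only [Idx, Kof, mem_product, Icc_sub_one_right_eq_Ico] at hp
    exact hasConstantChirality_of_notMem_defects hm hN hp.1 hp.2
  have h_hor : IdxH ε ⊆ Idx ε :=
    product_subset_product_left (Icc_subset_Icc_right (sub_le_self _ zero_le_two))
  have h_ver : IdxV ε ⊆ Idx ε :=
    product_subset_product_right (Icc_subset_Icc_right (sub_le_self _ zero_le_two))
  calc E ε δ (smoothedField δ M (branchingPotential m N))
      ≤ ε ^ 2 / 2 * (#(defects m (M + 1) ⌈1 / ε⌉ N) * (24 * δ ^ 2)) +
        ε ^ 2 / 2 * (#(defects m (M + 1) ⌈1 / ε⌉ N) * (24 * δ ^ 2)) := by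
        refine add_le_add
          (Ehor_smoothedField_le hδ hM le_rfl ?_ fun p hp ↦ h_chirality p (h_hor hp))
          (Ever_smoothedField_le hδ hM le_rfl ?_ fun p hp ↦ h_chirality p (h_ver hp))
        · exact fun x x' y ↦ by simpa using h_lip x x' y y
        · exact fun x y y' ↦ by simpa using h_lip x x y y'
    _ = 24 * ε ^ 2 * δ ^ 2 * #(defects m (M + 1) ⌈1 / ε⌉ N) := by ring
    _ ≤ _ := by gcongr

lemma exists_window_width (hδ : δ ∈ Set.Ioc 0 2) :
    ∃ M : ℕ, 1 ≤ M * √δ ∧ (M + 1) * √δ ≤ 4 := by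
  have hσ : 0 < √δ := sqrt_pos.2 hδ.1
  have hσ₂ : √δ ≤ 3 / 2 := sqrt_le_iff.2 ⟨by norm_num, by linarith [hδ.2]⟩
  have h_ceil := (Nat.ceil_lt_add_one (one_div_pos.2 hσ).le).le
  refine ⟨⌈1 / √δ⌉₊, (div_le_iff₀ hσ).1 (Nat.le_ceil _), ?_⟩
  calc (⌈1 / √δ⌉₊ + 1) * √δ ≤ (1 / √δ + 1 + 1) * √δ := by gcongr
    _ = 1 + 2 * √δ := by field_simp; ring
    _ ≤ 4 := by linarith

lemma exists_finest_scale (hε : 0 < ε) (N : ℕ) :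
    ∃ m : ℤ, 0 < m ∧ ⌈1 / ε⌉ ≤ 2 * (2 ^ N * m) ∧ 2 * ε * m ≤ 2 ^ (-(N : ℤ)) + 2 * ε := by
  have h_ceil := Int.le_ceil ((2 : ℝ) ^ (-(N : ℤ)) / (2 * ε))
  have h_ceil_lt := (Int.ceil_lt_add_one ((2 : ℝ) ^ (-(N : ℤ)) / (2 * ε))).le
  refine ⟨⌈(2 : ℝ) ^ (-(N : ℤ)) / (2 * ε)⌉, Int.ceil_pos.2 (by positivity), ?_, ?_⟩
  · rw [Int.ceil_le]
    push_cast
    calc 1 / ε = 2 * (2 ^ N * ((2 : ℝ) ^ (-(N : ℤ)) / (2 * ε))) := by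
          rw [zpow_neg, zpow_natCast]; field_simp
      _ ≤ _ := by gcongr
  · calc _ ≤ 2 * ε * ((2 : ℝ) ^ (-(N : ℤ)) / (2 * ε) + 1) := by gcongr
      _ = _ := by field_simp

lemma ceil_one_div_mul_le_two (hε₀ : 0 < ε) (hε₁ : ε ≤ 1) : (⌈1 / ε⌉ : ℝ) * ε ≤ 2 := by
  calc (⌈1 / ε⌉ : ℝ) * ε ≤ (1 / ε + 1) * ε := by gcongr; exact (Int.ceil_lt_add_one _).le
    _ = 1 + ε := by field_simp
    _ ≤ 2 := by linarith

theorem branching_competitor_estimate_general :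
    ∃ C : ℝ, 0 < C ∧ ∀ ε δ : ℝ, ε ∈ Set.Ioo (0 : ℝ) 1 → δ ∈ Set.Ioc (0 : ℝ) 2 → ∀ N : ℕ,
      ∃ u : ℤ × ℤ → ℝ × ℝ, InS0 ε u ∧
        E ε δ u ≤ C * ((N + 1) * (ε * δ * √δ) + δ ^ 2 * (2 : ℝ) ^ (-(N : ℤ))) := by
  refine ⟨4032, by norm_num, fun ε δ ⟨hε₀, hε₁⟩ hδ N ↦ ?_⟩
  obtain ⟨M, hM, hMσ⟩ := exists_window_width hδ
  obtain ⟨m, hm, hN, hmε⟩ := exists_finest_scale hε₀ N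
  refine ⟨smoothedField δ M (branchingPotential m N),
    inS0_smoothedField (window_width_pos hM) (fun x hx ↦ branchingPotential_of_nonpos hm N hx)
      ε δ, ?_⟩
  have h_side := ceil_one_div_mul_le_two hε₀ hε₁.le
  have hσ : √δ ^ 2 = δ := sq_sqrt hδ.1.le
  have hσ₂ : √δ ≤ 2 := sqrt_le_iff.2 ⟨by norm_num, by linarith [hδ.2]⟩
  have hδ₀ := hδ.1
  have h_round : ε * δ * √δ * √δ ≤ (N + 1) * (ε * δ * √δ) * 2 := by
    have h_one : (1 : ℝ) ≤ N + 1 := le_add_of_nonneg_left N.cast_nonneg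
    exact mul_le_mul (le_mul_of_one_le_left (by positivity) h_one) hσ₂ (by positivity)
      (by positivity)
  have h_layer : 0 ≤ δ ^ 2 * (2 : ℝ) ^ (-(N : ℤ)) := by positivity
  calc E ε δ (smoothedField δ M (branchingPotential m N))
      ≤ 24 * ε ^ 2 * δ ^ 2 * (⌈1 / ε⌉ * (2 * m + 20 * (N + 1) * (M + 1))) :=
        E_smoothedField_branchingPotential_le hδ hm hM hN hε₀.le
    _ = 24 * (⌈1 / ε⌉ * ε) *
          (δ ^ 2 * (2 * ε * m) + 20 * (N + 1) * (ε * δ * √δ * ((M + 1) * √δ))) := by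
        linear_combination -480 * ⌈1 / ε⌉ * ε ^ 2 * δ * (N + 1) * (M + 1) * hσ
    _ ≤ 24 * 2 * (δ ^ 2 * (2 ^ (-(N : ℤ)) + 2 * ε) + 20 * (N + 1) * (ε * δ * √δ * 4)) := by
        gcongr
    _ = 3840 * ((N + 1) * (ε * δ * √δ)) + 96 * (ε * δ * √δ * √δ) +
          48 * (δ ^ 2 * 2 ^ (-(N : ℤ))) := by
        linear_combination -96 * ε * δ * hσ
    _ ≤ 4032 * ((N + 1) * (ε * δ * √δ) + δ ^ 2 * 2 ^ (-(N : ℤ))) := by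
        linarith

lemma interface_cost_le {lam : ℝ} {N : ℕ} (hε : 0 ≤ ε) (hδ : 0 ≤ δ) (hN : 1 ≤ N)
    (hlam : 0 < lam) :
    (N + 1) * (ε * δ * √δ) ≤ N * δ ^ 2 * lam + ε ^ 2 * δ * N / lam := by
  have hN' : (1 : ℝ) ≤ N := mod_cast hN
  calc (N + 1) * (ε * δ * √δ) ≤ (N + N) * (ε * δ * √δ) := by gcongr
    _ = N * δ / lam * (2 * (√δ * lam) * ε) := by field_simp; ring
    _ ≤ N * δ / lam * ((√δ * lam) ^ 2 + ε ^ 2) := by gcongr; exact two_mul_le_add_sq _ _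
    _ = N * δ ^ 2 * lam + ε ^ 2 * δ * N / lam := by
        rw [mul_pow, sq_sqrt hδ]; field_simp

lemma interface_cost_add_layer_cost_le {lam : ℝ} {N : ℕ} (hε : 0 ≤ ε) (hδ : 0 ≤ δ) (hN : 1 ≤ N)
    (hlam : 0 < lam) :
    (N + 1) * (ε * δ * √δ) + δ ^ 2 * (2 : ℝ) ^ (-(N : ℤ)) ≤
      N * δ ^ 2 * lam + δ ^ 2 * (2 : ℝ) ^ (-(N : ℤ)) + ε ^ 2 * δ * N / lam +
        ε ^ 2 * δ * (2 : ℝ) ^ (-(N : ℤ)) / lam ^ 2 := by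
  have h_last : 0 ≤ ε ^ 2 * δ * (2 : ℝ) ^ (-(N : ℤ)) / lam ^ 2 := by positivity
  linarith [interface_cost_le hε hδ hN hlam]

end Competitor

/-- Inequality (5.2): energy estimate for the branching-type competitor. -/
theorem branching_competitor_estimate :
    ∃ C : ℝ, 0 < C ∧ ∀ ε δ : ℝ, ε ∈ Set.Ioo (0 : ℝ) (1 / 2) → δ ∈ Set.Ioo (0 : ℝ) 1 →
      2 * ε ≤ Real.sqrt δ →
      ∀ N : ℕ, 1 ≤ N → (2 : ℝ) ^ (-(N : ℤ)) ≤ ε / Real.sqrt δ →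
      ∀ lam : ℝ, lam ∈ Set.Ioo (0 : ℝ) ((2 : ℝ) ^ (-(N : ℤ))) →
      ∃ u : ℤ × ℤ → ℝ × ℝ, InS0 ε u ∧
        E ε δ u ≤ C * ((N : ℝ) * δ ^ 2 * lam + δ ^ 2 * (2 : ℝ) ^ (-(N : ℤ)) +
          ε ^ 2 * δ * (N : ℝ) / lam + ε ^ 2 * δ * (2 : ℝ) ^ (-(N : ℤ)) / lam ^ 2) := by
  obtain ⟨C, hC, h⟩ := branching_competitor_estimate_general
  exact ⟨C, hC, fun ε δ hε hδ _ N hN _ lam hlam ↦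
    (h ε δ ⟨hε.1, by linarith [hε.2]⟩ ⟨hδ.1, by linarith [hδ.2]⟩ N).imp fun _ ⟨hu, hE⟩ ↦
      ⟨hu, hE.trans <| mul_le_mul_of_nonneg_left
        (interface_cost_add_layer_cost_le hε.1.le hδ.1.le hN hlam.1) hC.le⟩⟩
end
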